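/- arXiv:1302.5394 — 3 statements merged into one kernel-verified Lean document; each statement's English description precedes it below -/
import Mathlib

section
/- Let n, k, r be positive integers with r ≥ 2 and n ≥ rk. Then χ(KG^r(n,k)_{2-stab}) ≥ (n − r(k−1) − 1) / (r − 1). -/
open Finset

/-- A proper `t`-coloring of the Kneser hypergraph `KG^r(F)`: vertices are the members of `F`,
colors are taken in `{1,...,t}`, and no set of `r` pairwise disjoint members of `F`
(an edge) is monochromatic. -/
def IsKneserColoring (n r t : ℕ) (F : Finset (Finset (Fin n)))
    (c : Finset (Fin n) → ℕ) : Prop :=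
  (∀ A ∈ F, c A ∈ Finset.Icc 1 t) ∧
    ∀ E : Finset (Finset (Fin n)), E ⊆ F → E.card = r →
      ((E : Set (Finset (Fin n))).Pairwise fun A B => Disjoint A B) →
      ¬ ∃ i, ∀ A ∈ E, c A = i

/-- The chromatic number of the Kneser hypergraph `KG^r(F)`. -/
noncomputable def kneserChrom (n r : ℕ) (F : Finset (Finset (Fin n))) : ℕ :=
  sInf {t | ∃ c, IsKneserColoring n r t F c}

/-- A subset `A` of `[n]` (identified with `Fin n`) is `s`-stable: any two distinct
elements `i, j ∈ A` satisfy `s ≤ |i - j| ≤ n - s`. -/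
def Stable (n s : ℕ) (A : Finset (Fin n)) : Prop :=
  ∀ i ∈ A, ∀ j ∈ A, i ≠ j →
    s ≤ max i.val j.val - min i.val j.val ∧ max i.val j.val - min i.val j.val ≤ n - s

open Classical in
/-- The vertex set of the `s`-stable Kneser hypergraph `KG^r(n,k)_{s-stab}`:
all `s`-stable `k`-element subsets of `[n]`. -/
noncomputable def stableSets (n s k : ℕ) : Finset (Finset (Fin n)) :=
  Finset.univ.filter fun A => A.card = k ∧ Stable n s A


namespace KnS

abbrev Ch (p : ℕ) (α : Type) := List α →₀ ZMod p

/-- the map on chains induced by a map of vertices -/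
noncomputable def mp (p : ℕ) {α β : Type} (f : α → β) : Ch p α →ₗ[ZMod p] Ch p β :=
  Finsupp.lmapDomain _ _ (List.map f)

noncomputable def cn (p : ℕ) {α : Type} (x : α) : Ch p α →ₗ[ZMod p] Ch p α :=
  Finsupp.lmapDomain _ _ (List.cons x)

noncomputable def sg (p : ℕ) {α : Type} (l : List α) : Ch p α := Finsupp.single l 1

noncomputable def bdl (p : ℕ) {α : Type} : List α → Ch p α
  | [] => 0
  | x :: l => sg p l - cn p x (bdl p l)

noncomputable def bd (p : ℕ) {α : Type} : Ch p α →ₗ[ZMod p] Ch p α :=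
  Finsupp.linearCombination _ (bdl p)

noncomputable def prl (p : ℕ) {α : Type} (f : α → α) : List α → Ch p α
  | [] => 0
  | x :: l => sg p (x :: f x :: l.map f) - cn p x (prl p f l)

noncomputable def pr (p : ℕ) {α : Type} (f : α → α) : Ch p α →ₗ[ZMod p] Ch p α :=
  Finsupp.linearCombination _ (prl p f)

section
variable {p : ℕ} {α β : Type}

theorem ext_sg {M : Type} [AddCommMonoid M] [Module (ZMod p) M] {f g : Ch p α →ₗ[ZMod p] M}
    (h : ∀ l, f (sg p l) = g (sg p l)) : f = g := by
  apply Finsupp.lhom_ext'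
  intro l
  apply LinearMap.ext_ring
  exact h l

@[simp] theorem mp_sg (f : α → β) (l : List α) : mp p f (sg p l) = sg p (l.map f) := by
  simp [mp, sg]

@[simp] theorem cn_sg (x : α) (l : List α) : cn p x (sg p l) = sg p (x :: l) := by
  simp [cn, sg]

@[simp] theorem bd_sg (l : List α) : bd p (sg p l) = bdl p l := by
  simp [bd, sg]

@[simp] theorem pr_sg (f : α → α) (l : List α) : pr p f (sg p l) = prl p f l := by
  simp [pr, sg]

theorem mp_cn (f : α → β) (x : α) (c : Ch p α) : mp p f (cn p x c) = cn p (f x) (mp p f c) := by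
  have : (mp p f) ∘ₗ (cn p x) = (cn p (f x)) ∘ₗ (mp p f) := ext_sg (by intro l; simp)
  exact LinearMap.congr_fun this c

theorem bd_cn (x : α) (c : Ch p α) : bd p (cn p x c) = c - cn p x (bd p c) := by
  have : (bd p) ∘ₗ (cn p x) = LinearMap.id - (cn p x) ∘ₗ (bd p) :=
    ext_sg (by intro l; simp [bdl])
  exact LinearMap.congr_fun this c

theorem bd_bd (c : Ch p α) : bd p (bd p c) = 0 := by
  have : (bd p) ∘ₗ (bd p) = (0 : Ch p α →ₗ[ZMod p] Ch p α) := by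
    apply ext_sg
    intro l
    induction l with
    | nil => simp [bdl]
    | cons x l ih =>
      simp only [LinearMap.comp_apply, bd_sg, LinearMap.zero_apply] at ih
      simp [bdl, bd_cn, ih]
  exact LinearMap.congr_fun this c

theorem bd_mp (f : α → β) (c : Ch p α) : bd p (mp p f c) = mp p f (bd p c) := by
  have : (bd p) ∘ₗ (mp p f) = (mp p f) ∘ₗ (bd p) := by
    apply ext_sg
    intro l
    induction l with
    | nil => simp [bdl]
    | cons x l ih =>
      simp only [LinearMap.comp_apply, bd_sg, mp_sg] at ih
      simp [bdl, mp_cn, ih]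
  exact LinearMap.congr_fun this c

theorem pr_cn (f : α → α) (x : α) (c : Ch p α) :
    pr p f (cn p x c) = cn p x (cn p (f x) (mp p f c)) - cn p x (pr p f c) := by
  have : (pr p f) ∘ₗ (cn p x) = (cn p x) ∘ₗ (cn p (f x)) ∘ₗ (mp p f) - (cn p x) ∘ₗ (pr p f) :=
    ext_sg (by intro l; simp [prl])
  exact LinearMap.congr_fun this c

theorem bd_pr (f : α → α) (c : Ch p α) :
    bd p (pr p f c) = mp p f c - c - pr p f (bd p c) := by
  have : (bd p) ∘ₗ (pr p f) = mp p f - LinearMap.id - (pr p f) ∘ₗ (bd p) := by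
    apply ext_sg
    intro l
    induction l with
    | nil => simp [bdl, prl]
    | cons x l ih =>
      simp only [LinearMap.comp_apply, bd_sg, mp_sg, pr_sg, LinearMap.sub_apply,
        LinearMap.id_apply] at ih
      simp only [LinearMap.comp_apply, bd_sg, mp_sg, pr_sg, LinearMap.sub_apply,
        LinearMap.id_apply, prl, bdl, map_sub, bd_cn, pr_cn, ih, List.map_cons, cn_sg]
      have hm : bdl p (l.map f) = mp p f (bdl p l) := by simpa using bd_mp f (sg p l)
      rw [hm]
      abel
  exact LinearMap.congr_fun this c

/-- coning off -/
noncomputable def cone (f : α → α) (v : α) : Ch p α →ₗ[ZMod p] Ch p α :=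
  cn p v ∘ₗ mp p f - pr p f

theorem bd_cone (f : α → α) (v : α) (z : Ch p α) (hz : bd p z = 0) :
    bd p (cone f v z) = z := by
  simp [cone, bd_cn, bd_pr, bd_mp, hz]

/-- the operators `g - 1` and `1 + g + ... + g^(p-1)` -/
noncomputable def rho (p : ℕ) (γ : α → α) (i : ℕ) : Ch p α →ₗ[ZMod p] Ch p α :=
  if Even i then mp p γ - 1 else ∑ k ∈ range p, (mp p γ) ^ k

theorem mp_pow (γ : α → α) (k : ℕ) : (mp p γ) ^ k = mp p (γ^[k]) := by
  induction k with
  | zero => apply ext_sg; intro l; simp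
  | succ k ih =>
    rw [pow_succ, ih]
    apply ext_sg; intro l; simp [Function.iterate_succ]

theorem rho_rho (γ : α → α) (hγ : γ^[p] = id) (i : ℕ) (c : Ch p α) :
    rho p γ (i+1) (rho p γ i c) = 0 := by
  have h1 : (mp p γ : Module.End (ZMod p) (Ch p α)) ^ p = 1 := by
    rw [mp_pow, hγ]; apply ext_sg; intro l; simp
  have : rho p γ (i+1) * rho p γ i = 0 := by
    unfold rho
    by_cases h : Even i
    · have h' : ¬ Even (i+1) := by simpa [Nat.even_add_one] using h
      rw [if_pos h, if_neg h']
      refine (geom_sum_mul (R := Module.End (ZMod p) (Ch p α)) (mp p γ) p).trans ?_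
      rw [h1, sub_self]
    · have h' : Even (i+1) := by simpa [Nat.even_add_one] using h
      rw [if_neg h, if_pos h']
      refine (mul_geom_sum (R := Module.End (ZMod p) (Ch p α)) (mp p γ) p).trans ?_
      rw [h1, sub_self]
  exact LinearMap.congr_fun this c

theorem rho_add_two (γ : α → α) (i : ℕ) : rho p γ (i+2) = rho p γ i := by
  unfold rho
  simp [Nat.even_add]

theorem bd_rho (γ : α → α) (i : ℕ) (c : Ch p α) :
    bd p (rho p γ i c) = rho p γ i (bd p c) := by
  unfold rho
  split_ifs
  · simp [bd_mp]
  · simp [mp_pow, bd_mp]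

theorem mp_rho (γ : α → α) (δ : β → β) (s : α → β) (h : ∀ x, s (γ x) = δ (s x))
    (i : ℕ) (c : Ch p α) :
    mp p s (rho p γ i c) = rho p δ i (mp p s c) := by
  have key : ∀ k (c : Ch p α), mp p s (mp p (γ^[k]) c) = mp p (δ^[k]) (mp p s c) := by
    intro k c
    have : mp p s ∘ₗ mp p (γ^[k]) = mp p (δ^[k]) ∘ₗ mp p s := by
      apply ext_sg; intro l
      have hk : ∀ x, s (γ^[k] x) = δ^[k] (s x) := by
        intro x
        exact Function.Semiconj.iterate_right (f := s) (ga := γ) (gb := δ) h k x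
      have hk' : s ∘ γ^[k] = δ^[k] ∘ s := funext hk
      simp [hk']
    exact LinearMap.congr_fun this c
  unfold rho
  split_ifs
  · simpa using key 1 c
  · simp [mp_pow, key]

end

section cochains
variable {p : ℕ} [hp : Fact p.Prime]

def Norm (ψ : Ch p (ZMod p) →ₗ[ZMod p] ZMod p) : Prop :=
  ∀ l : List (ZMod p), ¬ l.IsChain (· ≠ ·) → ψ (sg p l) = 0

theorem norm_bd (ψ : Ch p (ZMod p) →ₗ[ZMod p] ZMod p) (h : Norm ψ) : Norm (ψ ∘ₗ bd p) := by
  let W : Submodule (ZMod p) (Ch p (ZMod p)) :=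
    Submodule.span _ {c | ∃ l : List (ZMod p), ¬ l.IsChain (· ≠ ·) ∧ c = sg p l}
  have hW : W ≤ LinearMap.ker ψ := by
    apply Submodule.span_le.2
    rintro c ⟨l, hl, rfl⟩
    exact h l hl
  have hc : ∀ x, W ≤ W.comap (cn p x) := by
    intro x
    apply Submodule.span_le.2
    rintro c ⟨l, hl, rfl⟩
    apply Submodule.subset_span
    refine ⟨x :: l, ?_, by simp⟩
    intro h'
    exact hl h'.tail
  have hxx : ∀ (x : ZMod p) c, cn p x (cn p x c) ∈ W := by
    intro x c
    induction c using Finsupp.induction_linear with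
    | zero => simp
    | add f g hf hg => rw [map_add, map_add]; exact W.add_mem hf hg
    | single l a =>
      have : (Finsupp.single l a : Ch p (ZMod p)) = a • sg p l := by simp [sg]
      rw [this, map_smul, map_smul, cn_sg, cn_sg]
      apply W.smul_mem
      exact Submodule.subset_span ⟨_, by simp, rfl⟩
  suffices H : ∀ l : List (ZMod p), ¬ l.IsChain (· ≠ ·) → bdl p l ∈ W by
    intro l hl
    have := hW (H l hl)
    simpa using this
  intro l
  induction l with
  | nil => simp
  | cons x l ih =>
    intro hl
    by_cases h' : l.IsChain (· ≠ ·)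
    · cases l with
      | nil => simp at hl
      | cons y l =>
        have : x = y := by
          by_contra hne
          exact hl (List.isChain_cons_cons.2 ⟨hne, h'⟩)
        subst this
        simp only [bdl, map_sub, cn_sg]
        simpa using hxx x _
    · exact W.sub_mem (Submodule.subset_span ⟨l, h', rfl⟩) (hc x (ih h'))

noncomputable def lin (f : List (ZMod p) → ZMod p) : Ch p (ZMod p) →ₗ[ZMod p] ZMod p :=
  Finsupp.linearCombination _ f

@[simp] theorem lin_sg (f : List (ZMod p) → ZMod p) (l) : lin f (sg p l) = f l := by
  simp [lin, sg]

theorem chain_shift (l : List (ZMod p)) (a : ZMod p) :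
    (l.map (· + a)).IsChain (· ≠ ·) ↔ l.IsChain (· ≠ ·) := by
  rw [List.isChain_map]
  simp

theorem iter_add (k : ℕ) : (fun x : ZMod p => x + 1)^[k] = (· + (k : ZMod p)) := by
  funext x
  induction k with
  | zero => simp
  | succ k ih => rw [Function.iterate_succ_apply', ih]; push_cast; ring

theorem exact_step (i : ℕ) (b : Ch p (ZMod p) →ₗ[ZMod p] ZMod p) (hb : Norm b)
    (h0 : b (sg p []) = 0) (h : ∀ c, b (rho p (· + 1) (i+1) c) = 0) :
    ∃ ψ, Norm ψ ∧ ∀ c, ψ (rho p (· + 1) i c) = b c := by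
  by_cases hi : Even i
  · have hN : ∀ l : List (ZMod p), ∑ k ∈ range p, b (sg p (l.map (· + (k : ZMod p)))) = 0 := by
      intro l
      have h' : ¬ Even (i+1) := by simpa [Nat.even_add_one] using hi
      have := h (sg p l)
      simpa [rho, if_neg h', mp_pow, iter_add] using this
    let f : List (ZMod p) → ZMod p := fun l => match l with
      | [] => 0
      | g :: l => ∑ k ∈ range g.val, b (sg p ((g :: l).map (· + ((k : ZMod p) - g))))
    refine ⟨lin f, ?_, ?_⟩
    · intro l hl
      rw [lin_sg]
      cases l with
      | nil => rfl
      | cons g l =>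
        apply Finset.sum_eq_zero
        intro k _
        apply hb
        rwa [chain_shift]
    · suffices lin f ∘ₗ rho p (· + 1) i = b from fun c => LinearMap.congr_fun this c
      apply ext_sg
      intro l
      simp only [rho, if_pos hi, LinearMap.comp_apply, LinearMap.sub_apply, mp_sg, map_sub, lin_sg,
        Module.End.one_apply]
      cases l with
      | nil => simp [f, h0]
      | cons g l =>
        have e1 : f (List.map (· + 1) (g :: l)) =
            ∑ k ∈ range (g+1).val, b (sg p ((g :: l).map (· + ((k : ZMod p) - g)))) := by
          simp only [f, List.map_cons, List.map_map]
          apply Finset.sum_congr rfl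
          intro k _
          congr 2
          simp only [List.cons.injEq]
          constructor
          · ring
          · apply List.map_congr_left; intro a _; simp only [Function.comp]; ring
        rw [e1]
        have e2 : b (sg p (g :: l)) =
          b (sg p ((g :: l).map (· + (((g.val : ℕ) : ZMod p) - g)))) := by simp
        have e3 : f (g :: l) = ∑ k ∈ range g.val, b (sg p ((g :: l).map (· + ((k : ZMod p) - g)))) := rfl
        rw [e2, e3]
        have hlt := ZMod.val_lt g
        by_cases hg : g.val + 1 < p
        · have : (g+1).val = g.val + 1 := by
            rw [ZMod.val_add, ZMod.val_one, Nat.mod_eq_of_lt hg]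
          rw [this, Finset.sum_range_succ]; ring
        · have h1 : g.val + 1 = p := by omega
          have : (g+1).val = 0 := by
            rw [ZMod.val_add, ZMod.val_one, h1, Nat.mod_self]
          rw [this]
          have h2 := hN ((g :: l).map (· + (- g)))
          have hr : range p = range (g.val + 1) := by rw [h1]
          rw [hr] at h2
          rw [Finset.sum_range_succ] at h2
          simp only [List.map_map] at h2
          have h3 : ∀ k : ZMod p, ((fun x : ZMod p => x + k) ∘ fun x => x + -g) = (· + (k - g)) := by
            intro k; funext x; simp only [Function.comp]; ring
          simp only [h3] at h2
          simp only [Finset.range_zero, Finset.sum_empty]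
          linear_combination -h2
  · have hD1 : ∀ l : List (ZMod p), b (sg p (l.map (· + 1))) = b (sg p l) := by
      intro l
      have h' : Even (i+1) := by simpa [Nat.even_add_one] using hi
      have := h (sg p l)
      simp only [rho, if_pos h', LinearMap.sub_apply, map_sub, mp_sg, Module.End.one_apply] at this
      exact sub_eq_zero.1 this
    have hD : ∀ (k : ℕ) (l : List (ZMod p)), b (sg p (l.map (· + (k : ZMod p)))) = b (sg p l) := by
      intro k
      induction k with
      | zero => simp
      | succ k ih =>
        intro l
        rw [← ih l, ← hD1 (l.map (· + (k : ZMod p))), List.map_map]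
        congr 3
        funext x; simp only [Function.comp]; push_cast; ring
    let f : List (ZMod p) → ZMod p := fun l => match l with
      | [] => 0
      | g :: l => if g = 0 then b (sg p (g :: l)) else 0
    refine ⟨lin f, ?_, ?_⟩
    · intro l hl
      rw [lin_sg]
      cases l with
      | nil => rfl
      | cons g l =>
        simp only [f]
        rw [hb _ hl]; simp
    · suffices lin f ∘ₗ rho p (· + 1) i = b from fun c => LinearMap.congr_fun this c
      apply ext_sg
      intro l
      simp only [rho, if_neg hi, LinearMap.comp_apply, LinearMap.sum_apply, mp_pow, iter_add, mp_sg,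
        map_sum, lin_sg]
      cases l with
      | nil => simp [f, h0]
      | cons g l =>
        rw [Finset.sum_eq_single_of_mem (-g).val (Finset.mem_range.2 (ZMod.val_lt _))]
        · have := hD (-g).val (g :: l)
          rw [← this]
          simp [f]
        · intro k hk hne
          simp only [f, List.map_cons]
          rw [if_neg]
          intro h0
          apply hne
          have : (k : ZMod p) = -g := by linear_combination h0
          rw [← this, ZMod.val_natCast, Nat.mod_eq_of_lt (Finset.mem_range.1 hk)]

theorem exists_psi : ∃ ψ : ℕ → (Ch p (ZMod p) →ₗ[ZMod p] ZMod p),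
    (∀ i, Norm (ψ i)) ∧ ψ 0 (sg p []) = 1 ∧
    ∀ i c, ψ (i+1) (rho p (· + 1) i c) = ψ i (bd p c) := by
  have step : ∀ (i : ℕ) (ψ : Ch p (ZMod p) →ₗ[ZMod p] ZMod p),
      (Norm ψ ∧ ∀ c, ψ (bd p (rho p (· + 1) (i+1) c)) = 0) →
      ∃ ψ' : Ch p (ZMod p) →ₗ[ZMod p] ZMod p,
        (Norm ψ' ∧ ∀ c, ψ' (bd p (rho p (· + 1) (i+1+1) c)) = 0) ∧
        ∀ c, ψ' (rho p (· + 1) i c) = ψ (bd p c) := by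
    intro i ψ ⟨h1, h2⟩
    obtain ⟨ψ', h3, h4⟩ := exact_step i (ψ ∘ₗ bd p) (norm_bd ψ h1) (by simp [bdl]) h2
    refine ⟨ψ', ⟨h3, ?_⟩, h4⟩
    intro c
    rw [rho_add_two, bd_rho, h4]
    simp [bd_bd]
  let f0 : List (ZMod p) → ZMod p := fun l => if l = [] then 1 else 0
  have base : Norm (lin f0) ∧ ∀ c, (lin f0) (bd p (rho p (· + 1) (0+1) c)) = 0 := by
    constructor
    · intro l hl
      have : l ≠ [] := by rintro rfl; simp at hl
      simp [f0, this]
    · intro c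
      suffices (lin f0) ∘ₗ (bd p) ∘ₗ (rho p (· + 1) (0+1)) = 0 from LinearMap.congr_fun this c
      have hz : ∀ (x : ZMod p) (c : Ch p (ZMod p)), lin f0 (cn p x c) = 0 := by
        intro x c
        suffices (lin f0) ∘ₗ (cn p x) = 0 from LinearMap.congr_fun this c
        apply ext_sg; intro l; simp [f0]
      apply ext_sg
      intro l
      have h1 : ¬ Even (0 + 1) := by decide
      simp only [rho, if_neg h1, LinearMap.comp_apply, LinearMap.sum_apply, mp_pow, iter_add, mp_sg,
        map_sum]
      cases l with
      | nil => simp [bdl]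
      | cons g l => simp [bdl, hz, f0]
  choose! nx hnx1 hnx2 using step
  let ψ : ℕ → (Ch p (ZMod p) →ₗ[ZMod p] ZMod p) := fun i => Nat.rec (lin f0) (fun i ψ => nx i ψ) i
  have hψ : ∀ i, Norm (ψ i) ∧ ∀ c, ψ i (bd p (rho p (· + 1) (i+1) c)) = 0 := by
    intro i
    induction i with
    | zero => exact base
    | succ i ih => exact hnx1 i _ ih
  refine ⟨ψ, fun i => (hψ i).1, ?_, fun i c => hnx2 i _ (hψ i) c⟩
  simp [ψ, f0]

end cochains
end KnS

namespace KnS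
section tucker
variable {p : ℕ}

/-- nonzero sign vectors -/
abbrev Vt (p : ℕ) := {X : ℕ → Option (ZMod p) // ∃ i, X i ≠ none}

def vle (X Y : Vt p) : Prop := ∀ i, X.1 i ≠ none → Y.1 i = X.1 i

def gam (X : Vt p) : Vt p := ⟨fun i => (X.1 i).map (· + 1), by
  obtain ⟨i, hi⟩ := X.2
  exact ⟨i, by simpa using hi⟩⟩

def addv (a : ℕ) (X : Vt p) : Vt p := ⟨Function.update X.1 a (some 0), ⟨a, by simp⟩⟩

def vtx (a : ℕ) : Vt p := ⟨Function.update (fun _ => none) a (some 0), ⟨a, by simp⟩⟩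

def sup (A : Finset ℕ) (X : Vt p) : Prop := ∀ i, X.1 i ≠ none → i ∈ A

theorem vle_trans {X Y Z : Vt p} (h : vle X Y) (h' : vle Y Z) : vle X Z := by
  intro i hi
  rw [h' i (by rw [h i hi]; exact hi), h i hi]

theorem vle_addv {A : Finset ℕ} {a : ℕ} (ha : a ∉ A) {X : Vt p} (h : sup A X) :
    vle X (addv a X) := by
  intro i hi
  have : i ≠ a := by rintro rfl; exact ha (h _ hi)
  simp [addv, this]

theorem vtx_vle (a : ℕ) (X : Vt p) : vle (vtx a) (addv a X) := by
  intro i hi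
  by_cases h : i = a
  · subst h; simp [addv, vtx]
  · simp [vtx, h] at hi

theorem addv_mono (a : ℕ) {X Y : Vt p} (h : vle X Y) : vle (addv a X) (addv a Y) := by
  intro i hi
  by_cases h' : i = a
  · subst h'; simp [addv]
  · simp only [addv, ne_eq, h', not_false_eq_true, Function.update_of_ne] at hi ⊢
    exact h i hi

theorem sup_addv {A : Finset ℕ} {a : ℕ} {X : Vt p} (h : sup A X) :
    sup (insert a A) (addv a X) := by
  intro i hi
  by_cases h' : i = a
  · simp [h']
  · simp only [addv, ne_eq, h', not_false_eq_true, Function.update_of_ne] at hi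
    exact Finset.mem_insert_of_mem (h i hi)

theorem sup_vtx {A : Finset ℕ} {a : ℕ} : sup (insert a A) (vtx a : Vt p) := by
  intro i hi
  by_cases h' : i = a
  · simp [h']
  · simp [vtx, h'] at hi

theorem sup_insert {A : Finset ℕ} {a : ℕ} {X : Vt p} (h : sup A X) :
    sup (insert a A) X := fun i hi => Finset.mem_insert_of_mem (h i hi)

theorem sup_gam {A : Finset ℕ} {X : Vt p} (h : sup A X) : sup A (gam X) := by
  intro i hi
  apply h
  simpa [gam] using hi

theorem gam_mono {X Y : Vt p} (h : vle X Y) : vle (gam X) (gam Y) := by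
  intro i hi
  simp only [gam] at hi ⊢
  rw [h i (by simpa using hi)]

theorem gam_iter (k : ℕ) (X : Vt p) (i : ℕ) :
    (gam^[k] X).1 i = (X.1 i).map (· + (k : ZMod p)) := by
  induction k with
  | zero => simp
  | succ k ih =>
    rw [Function.iterate_succ_apply']
    simp only [gam, ih, Option.map_map]
    congr 1
    funext x; simp only [Function.comp]; push_cast; ring

theorem gam_p : (gam (p := p))^[p] = id := by
  funext X
  apply Subtype.ext
  funext i
  rw [gam_iter]
  simp

def Good (A : Finset ℕ) (m : ℕ) : Set (List (Vt p)) :=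
  {l | l.length = m ∧ l.Pairwise vle ∧ ∀ X ∈ l, sup A X}

noncomputable def sp (p : ℕ) (S : Set (List (Vt p))) : Submodule (ZMod p) (Ch p (Vt p)) :=
  Finsupp.supported (ZMod p) (ZMod p) S

theorem sg_mem {S : Set (List (Vt p))} {l} (h : l ∈ S) : sg p l ∈ sp p S :=
  Finsupp.single_mem_supported _ _ h

theorem map_sp {S : Set (List (Vt p))} {W : Submodule (ZMod p) (Ch p (Vt p))}
    (f : Ch p (Vt p) →ₗ[ZMod p] Ch p (Vt p))
    (h : ∀ l ∈ S, f (sg p l) ∈ W) {c} (hc : c ∈ sp p S) : f c ∈ W := by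
  have : sp p S ≤ W.comap f := by
    unfold sp
    rw [Finsupp.supported_eq_span_single]
    apply Submodule.span_le.2
    rintro _ ⟨l, hl, rfl⟩
    exact h l hl
  exact this hc

theorem prl_mem {A : Finset ℕ} {a : ℕ} (ha : a ∉ A) (l : List (Vt p)) (m : ℕ) (hl : l ∈ Good A m) :
    prl p (addv a) l ∈
      sp p {l' | l' ∈ Good (insert a A) (m+1) ∧ ∀ Y, (∀ X ∈ l, vle Y X) → ∀ X ∈ l', vle Y X} := by
  induction l generalizing m with
  | nil => simp [prl]
  | cons X l ih =>
    obtain ⟨h1, h2, h3⟩ := hl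
    rw [List.pairwise_cons] at h2
    simp only [List.mem_cons, forall_eq_or_imp] at h3
    rw [prl]
    apply Submodule.sub_mem
    · apply sg_mem
      have hXX := vle_addv ha h3.1
      refine ⟨⟨by simpa using h1, ?_, ?_⟩, ?_⟩
      · simp only [List.pairwise_cons, List.mem_cons, forall_eq_or_imp, List.mem_map,
          forall_exists_index, and_imp, forall_apply_eq_imp_iff₂]
        refine ⟨⟨hXX, fun Y hY => vle_trans hXX (addv_mono a (h2.1 Y hY))⟩,
          fun Y hY => addv_mono a (h2.1 Y hY), ?_⟩
        rw [List.pairwise_map]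
        exact h2.2.imp (fun h => addv_mono a h)
      · simp only [List.mem_cons, forall_eq_or_imp, List.mem_map,
          forall_exists_index, and_imp, forall_apply_eq_imp_iff₂]
        exact ⟨sup_insert h3.1, sup_addv h3.1, fun Y hY => sup_addv (h3.2 Y hY)⟩
      · intro Y hY
        simp only [List.mem_cons, forall_eq_or_imp, List.mem_map,
          forall_exists_index, and_imp, forall_apply_eq_imp_iff₂] at hY ⊢
        exact ⟨hY.1, vle_trans hY.1 hXX, fun Z hZ =>
          vle_trans (hY.2 Z hZ) (vle_addv ha (h3.2 Z hZ))⟩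
    · have := ih l.length ⟨rfl, h2.2, h3.2⟩
      refine map_sp (cn p X) ?_ this
      rintro l' ⟨⟨g1, g2, g3⟩, g4⟩
      rw [cn_sg]
      apply sg_mem
      refine ⟨⟨?_, ?_, ?_⟩, ?_⟩
      · simp at h1 ⊢; omega
      · rw [List.pairwise_cons]
        exact ⟨g4 X h2.1, g2⟩
      · simp only [List.mem_cons, forall_eq_or_imp]
        exact ⟨sup_insert h3.1, g3⟩
      · intro Y hY
        simp only [List.mem_cons, forall_eq_or_imp] at hY ⊢
        exact ⟨hY.1, g4 Y hY.2⟩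

theorem cone_mem {A : Finset ℕ} {a : ℕ} (ha : a ∉ A) (m : ℕ) {c : Ch p (Vt p)}
    (hc : c ∈ sp p (Good A m)) : cone (addv a) (vtx a) c ∈ sp p (Good (insert a A) (m+1)) := by
  refine map_sp _ ?_ hc
  intro l hl
  simp only [cone, LinearMap.sub_apply, LinearMap.comp_apply, mp_sg, cn_sg, pr_sg]
  apply Submodule.sub_mem
  · obtain ⟨h1, h2, h3⟩ := hl
    apply sg_mem
    refine ⟨by simpa using h1, ?_, ?_⟩
    · simp only [List.pairwise_cons, List.mem_map,
          forall_exists_index, and_imp, forall_apply_eq_imp_iff₂]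
      refine ⟨fun Y _ => vtx_vle a Y, ?_⟩
      rw [List.pairwise_map]
      exact h2.imp (fun h => addv_mono a h)
    · simp only [List.mem_cons, forall_eq_or_imp, List.mem_map,
          forall_exists_index, and_imp, forall_apply_eq_imp_iff₂]
      exact ⟨sup_vtx, fun Y hY => sup_addv (h3 Y hY)⟩
  · have := prl_mem ha l m hl
    exact Finsupp.supported_mono (fun l' h => h.1) this

theorem mp_gam_mem {A : Finset ℕ} (m : ℕ) {c : Ch p (Vt p)}
    (hc : c ∈ sp p (Good A m)) : mp p gam c ∈ sp p (Good A m) := by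
  refine map_sp _ ?_ hc
  rintro l ⟨h1, h2, h3⟩
  rw [mp_sg]
  apply sg_mem
  refine ⟨by simpa using h1, ?_, ?_⟩
  · rw [List.pairwise_map]
    exact h2.imp (fun h => gam_mono h)
  · simp only [List.mem_map,
          forall_exists_index, and_imp, forall_apply_eq_imp_iff₂]
    exact fun Y hY => sup_gam (h3 Y hY)

theorem rho_mem {A : Finset ℕ} (m i : ℕ) {c : Ch p (Vt p)}
    (hc : c ∈ sp p (Good A m)) : rho p gam i c ∈ sp p (Good A m) := by
  unfold rho
  split_ifs
  · exact Submodule.sub_mem _ (mp_gam_mem m hc) hc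
  · rw [LinearMap.sum_apply]
    apply Submodule.sum_mem
    intro k hk
    clear hk
    induction k with
    | zero => simpa using hc
    | succ k ih =>
      rw [pow_succ']
      exact mp_gam_mem m ih

theorem tucker [hp : Fact p.Prime] (A : Finset ℕ) (s : Vt p → ZMod p)
    (hs : ∀ X, s (gam X) = s X + 1) :
    ∃ l : List (Vt p), l.length = A.card ∧ l.Pairwise vle ∧ (∀ X ∈ l, sup A X) ∧
      (l.map s).IsChain (· ≠ ·) := by
  obtain ⟨ψ, hn, h0, hψ⟩ := exists_psi (p := p)
  have main : ∃ z : Ch p (Vt p), z ∈ sp p (Good A A.card) ∧ bd p z = 0 ∧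
      rho p gam A.card z = 0 ∧ ψ A.card (mp p s z) = 1 := by
    induction A using Finset.induction_on with
    | empty =>
      refine ⟨sg p [], sg_mem (by simp [Good]), by simp [bdl], by simp [rho], by simpa using h0⟩
    | insert a A ha ih =>
      obtain ⟨z, h1, h2, h3, h4⟩ := ih
      rw [Finset.card_insert_of_notMem ha]
      refine ⟨rho p gam A.card (cone (addv a) (vtx a) z), rho_mem _ _ (cone_mem ha _ h1), ?_,
        rho_rho _ gam_p _ _, ?_⟩
      · rw [bd_rho, bd_cone _ _ _ h2, h3]
      · rw [mp_rho gam (· + 1) s hs, hψ, bd_mp, bd_cone _ _ _ h2, h4]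
  obtain ⟨z, h1, -, -, h4⟩ := main
  by_contra hcon
  push Not at hcon
  have : sp p (Good A A.card) ≤ LinearMap.ker (ψ A.card ∘ₗ mp p s) := by
    unfold sp
    rw [Finsupp.supported_eq_span_single]
    apply Submodule.span_le.2
    rintro _ ⟨l, ⟨g1, g2, g3⟩, rfl⟩
    change ψ A.card (mp p s (sg p l)) = 0
    rw [mp_sg]
    exact hn _ _ (hcon l g1 g2 g3)
  have := this h1
  rw [LinearMap.mem_ker, LinearMap.comp_apply, h4] at this
  exact one_ne_zero this

theorem tucker' [hp : Fact p.Prime] (A : Finset ℕ) (s : Vt p → ZMod p)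
    (hs : ∀ X, s (gam X) = s X + 1) (L : Vt p → ℕ) (N : ℕ)
    (h1 : ∀ X, sup A X → 1 ≤ L X ∧ L X ≤ N)
    (h2 : ∀ X Y, sup A X → sup A Y → vle X Y → L X ≤ L Y ∧ (L X = L Y → s X = s Y)) :
    A.card ≤ N := by
  obtain ⟨l, g1, g2, g3, g4⟩ := tucker A s hs
  have hch : (l.map L).IsChain (· < ·) := by
    rw [List.isChain_map] at g4 ⊢
    have g2' := g2.isChain
    clear g1 g2
    induction l with
    | nil => simp
    | cons X l ih =>
      cases l with
      | nil => simp
      | cons Y l =>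
        rw [List.isChain_cons_cons] at g4 g2' ⊢
        refine ⟨?_, ih (fun Z hZ => g3 Z (List.mem_cons_of_mem _ hZ)) g4.2 g2'.2⟩
        have := h2 X Y (g3 X (by simp)) (g3 Y (by simp)) g2'.1
        exact lt_of_le_of_ne this.1 (fun h => g4.1 (this.2 h))
  have hnd : (l.map L).Nodup := by
    rw [List.isChain_iff_pairwise] at hch
    exact hch.imp (fun h => ne_of_lt h)
  have hsub : (l.map L).toFinset ⊆ Finset.Icc 1 N := by
    intro x hx
    simp only [List.mem_toFinset, List.mem_map] at hx
    obtain ⟨X, hX, rfl⟩ := hx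
    exact Finset.mem_Icc.2 (h1 X (g3 X hX))
  have := Finset.card_le_card hsub
  rw [List.toFinset_card_of_nodup hnd] at this
  simp at this
  omega

end tucker
end KnS

namespace KnS

/-- `S` is a `k`-subset of `A` containing no two consecutive elements of `A`. -/
def St (A : Finset ℕ) (k : ℕ) (S : Finset ℕ) : Prop :=
  S ⊆ A ∧ S.card = k ∧ ∀ x ∈ S, ∀ y ∈ S, x < y → ∃ z ∈ A, x < z ∧ z < y

def Core (r : ℕ) : Prop :=
  ∀ (A : Finset ℕ) (k t : ℕ) (c : Finset ℕ → ℕ), 1 ≤ k →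
    (r - 1) * t + r * (k - 1) + 1 ≤ A.card → (∀ S, St A k S → c S < t) →
    ∃ E : Fin r → Finset ℕ, (∀ i, St A k (E i)) ∧ (∀ i j, i ≠ j → Disjoint (E i) (E j)) ∧
      ∃ q, ∀ i, c (E i) = q

section alt
variable {p : ℕ}

def Alt (X : Vt p) (T : Finset ℕ) : Prop :=
  (∀ x ∈ T, X.1 x ≠ none) ∧
  ∀ x ∈ T, ∀ y ∈ T, x < y → (∀ z ∈ T, ¬ (x < z ∧ z < y)) → X.1 x ≠ X.1 y

open Classical in
noncomputable def alt (A : Finset ℕ) (X : Vt p) : ℕ :=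
  (A.powerset.filter (fun T => Alt X T)).sup Finset.card

theorem le_alt {A : Finset ℕ} {X : Vt p} {T : Finset ℕ} (h : T ⊆ A) (h' : Alt X T) :
    T.card ≤ alt A X := by
  classical
  unfold alt
  apply Finset.le_sup (f := Finset.card)
  simp [h, h']

theorem exists_alt (A : Finset ℕ) (X : Vt p) : ∃ T ⊆ A, Alt X T ∧ T.card = alt A X := by
  classical
  unfold alt
  obtain ⟨T, hT, h⟩ := Finset.exists_mem_eq_sup (A.powerset.filter (fun T => Alt X T))
    ⟨∅, by simp [Alt]⟩ Finset.card
  simp only [Finset.mem_filter, Finset.mem_powerset] at hT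
  exact ⟨T, hT.1, hT.2, h.symm⟩

theorem alt_of_vle {X Y : Vt p} (h : vle X Y) {T : Finset ℕ} (hT : Alt X T) : Alt Y T := by
  refine ⟨fun x hx => ?_, fun x hx y hy hxy hz => ?_⟩
  · rw [h x (hT.1 x hx)]; exact hT.1 x hx
  · rw [h x (hT.1 x hx), h y (hT.1 y hy)]; exact hT.2 x hx y hy hxy hz

theorem alt_mono (A : Finset ℕ) {X Y : Vt p} (h : vle X Y) : alt A X ≤ alt A Y := by
  obtain ⟨T, h1, h2, h3⟩ := exists_alt A X
  rw [← h3]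
  exact le_alt h1 (alt_of_vle h h2)

theorem alt_gam (A : Finset ℕ) (X : Vt p) : alt A (gam X) = alt A X := by
  have : ∀ T, Alt (gam X) T ↔ Alt X T := by
    intro T
    have hinj : Function.Injective (Option.map (fun x : ZMod p => x + 1)) :=
      Option.map_injective (add_left_injective 1)
    simp only [Alt, gam, ne_eq, hinj.eq_iff, Option.map_eq_none_iff]
  unfold alt
  congr 1
  ext T
  simp only [Finset.mem_filter, this]

theorem alt_insert {X : Vt p} {T : Finset ℕ} (h : Alt X T) {a : ℕ} (ha : X.1 a ≠ none)
    (hlt : ∀ x ∈ T, a < x) (hm : ∀ m ∈ T, (∀ x ∈ T, m ≤ x) → X.1 a ≠ X.1 m) :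
    Alt X (insert a T) := by
  refine ⟨?_, ?_⟩
  · intro x hx
    rcases Finset.mem_insert.1 hx with rfl | hx
    · exact ha
    · exact h.1 x hx
  · intro x hx y hy hxy hz
    rcases Finset.mem_insert.1 hx with rfl | hx'
    · rcases Finset.mem_insert.1 hy with rfl | hy
      · omega
      · apply hm y hy
        intro w hw
        by_contra hlt'
        exact hz w (Finset.mem_insert_of_mem hw) ⟨hlt w hw, by omega⟩
    · rcases Finset.mem_insert.1 hy with rfl | hy
      · have := hlt x hx'; omega
      · exact h.2 x hx' y hy hxy (fun z hz' => hz z (Finset.mem_insert_of_mem hz'))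

noncomputable def fst (X : Vt p) : ℕ := sInf {i | X.1 i ≠ none}

theorem fst_spec (X : Vt p) : X.1 (fst X) ≠ none := Nat.sInf_mem (s := {i | X.1 i ≠ none}) X.2

theorem fst_le (X : Vt p) {i : ℕ} (h : X.1 i ≠ none) : fst X ≤ i :=
  Nat.sInf_le (s := {i | X.1 i ≠ none}) h

theorem fst_gam (X : Vt p) : fst (gam X) = fst X := by
  simp [fst, gam]

noncomputable def fs (X : Vt p) : ZMod p := (X.1 (fst X)).getD 0

theorem fs_spec (X : Vt p) : X.1 (fst X) = some (fs X) := by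
  unfold fs
  have := fst_spec X
  cases h : X.1 (fst X) with
  | none => exact absurd h this
  | some a => rfl

theorem fs_gam (X : Vt p) : fs (gam X) = fs X + 1 := by
  have h := fs_spec (gam X)
  rw [fst_gam] at h
  simp only [gam, fs_spec X, Option.map_some, Option.some.injEq] at h
  exact h.symm

theorem alt_pos {A : Finset ℕ} {X : Vt p} (h : sup A X) : 1 ≤ alt A X := by
  have : Alt X {fst X} := by
    refine ⟨?_, ?_⟩
    · simpa using fst_spec X
    · simp
  have := le_alt (A := A) (by simpa using h _ (fst_spec X)) this
  simpa using this

theorem fs_eq {A : Finset ℕ} {X Y : Vt p} (hX : sup A X) (hY : sup A Y) (h : vle X Y)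
    (he : alt A X = alt A Y) : fs X = fs Y := by
  by_contra hne
  obtain ⟨T, h1, h2, h3⟩ := exists_alt A X
  have hTX : ∀ x ∈ T, fst X ≤ x := fun x hx => fst_le X (h2.1 x hx)
  have hYX : fst Y < fst X := by
    have h5 : Y.1 (fst X) = X.1 (fst X) := h _ (fst_spec X)
    have h4 : fst Y ≤ fst X := fst_le Y (by rw [h5]; exact fst_spec X)
    apply lt_of_le_of_ne h4
    intro h6
    have := fs_spec Y
    rw [h6, h5, fs_spec X] at this
    exact hne (Option.some.inj this)
  have hTne : T.Nonempty := by
    rw [← Finset.card_pos, h3]; exact alt_pos hX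
  have hmin := T.min'_mem hTne
  have huniq : ∀ m ∈ T, (∀ x ∈ T, m ≤ x) → m = T.min' hTne := by
    intro m hm hx
    exact le_antisymm (hx _ hmin) (T.min'_le m hm)
  by_cases hc : X.1 (T.min' hTne) = some (fs Y)
  · have hlt : ∀ x ∈ T, fst X < x := by
      have : fst X ≠ T.min' hTne := by
        intro h7
        rw [← h7, fs_spec X] at hc
        exact hne (Option.some.inj hc)
      intro x hx
      have := hTX _ hmin
      have := T.min'_le x hx
      omega
    have := alt_insert h2 (fst_spec X) hlt (by
      intro m hm hx
      rw [huniq m hm hx, hc, fs_spec X]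
      intro h8
      exact hne (Option.some.inj h8))
    have := le_alt (A := A) (Finset.insert_subset (hX _ (fst_spec X)) h1) this
    rw [Finset.card_insert_of_notMem (fun hm => lt_irrefl _ (hlt _ hm))] at this
    omega
  · have hlt : ∀ x ∈ T, fst Y < x := fun x hx => lt_of_lt_of_le hYX (hTX x hx)
    have := alt_insert (alt_of_vle h h2) (fst_spec Y) hlt (by
      intro m hm hx
      rw [huniq m hm hx, h _ (h2.1 _ hmin), fs_spec Y]
      exact fun h8 => hc h8.symm)
    have := le_alt (A := A) (Finset.insert_subset (hY _ (fst_spec Y)) h1) this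
    rw [Finset.card_insert_of_notMem (fun hm => lt_irrefl _ (hlt _ hm))] at this
    omega

theorem exists_St [hp : Fact p.Prime] {A : Finset ℕ} {X : Vt p} {k : ℕ}
    (h : p * (k - 1) < alt A X) :
    ∃ S e, St A k S ∧ ∀ x ∈ S, X.1 x = some e := by
  classical
  obtain ⟨T, h1, h2, h3⟩ := exists_alt A X
  obtain ⟨e, -, he⟩ := Finset.exists_lt_card_fiber_of_mul_lt_card_of_maps_to
    (s := T) (t := (Finset.univ : Finset (ZMod p))) (f := fun x => (X.1 x).getD 0) (n := k - 1)
    (by simp) (by simpa [ZMod.card, h3] using h)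
  obtain ⟨S, hS, hcard⟩ := Finset.exists_subset_card_eq (n := k) (s := T.filter
    (fun x => (X.1 x).getD 0 = e)) (by omega)
  have hval : ∀ x ∈ S, x ∈ T ∧ X.1 x = some e := by
    intro x hx
    have := Finset.mem_filter.1 (hS hx)
    refine ⟨this.1, ?_⟩
    have h4 := h2.1 x this.1
    cases h5 : X.1 x with
    | none => exact absurd h5 h4
    | some b => simpa [h5] using this.2
  refine ⟨S, e, ⟨fun x hx => h1 (hval x hx).1, hcard, ?_⟩, fun x hx => (hval x hx).2⟩
  intro x hx y hy hxy
  by_contra hcon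
  push Not at hcon
  apply h2.2 x (hval x hx).1 y (hval y hy).1 hxy
  · intro z hz hz'
    have := hcon z (h1 hz) hz'.1
    omega
  · rw [(hval x hx).2, (hval y hy).2]

end alt

section prime
variable {p : ℕ} [hp : Fact p.Prime]

open Classical in
noncomputable def cs (A : Finset ℕ) (k : ℕ) (c : Finset ℕ → ℕ) (X : Vt p) (q : ℕ) :
    Finset (ZMod p) :=
  Finset.univ.filter (fun e => ∃ S, St A k S ∧ c S = q ∧ ∀ x ∈ S, X.1 x = some e)

noncomputable def bary (B : Finset (ZMod p)) : ZMod p := (∑ b ∈ B, b) / (B.card : ZMod p)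

noncomputable def shf (B : Finset (ZMod p)) : Finset (ZMod p) :=
  B.map (Equiv.addRight (1 : ZMod p)).toEmbedding

theorem bary_shf (B : Finset (ZMod p)) (h : B.Nonempty) (h' : B.card < p) :
    bary (shf B) = bary B + 1 := by
  have h0 : (B.card : ZMod p) ≠ 0 := by
    rw [Ne, ZMod.natCast_eq_zero_iff]
    intro hd
    have := Nat.le_of_dvd h.card_pos hd
    omega
  simp only [bary, shf, Finset.sum_map, Finset.card_map]
  simp only [Equiv.coe_toEmbedding, Equiv.coe_addRight, Finset.sum_add_distrib, Finset.sum_const,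
    nsmul_eq_mul, mul_one]
  field_simp

theorem cs_gam (A : Finset ℕ) (k : ℕ) (c : Finset ℕ → ℕ) (X : Vt p) (q : ℕ) :
    cs A k c (gam X) q = shf (cs A k c X q) := by
  classical
  ext e
  simp only [cs, shf, Finset.mem_filter, Finset.mem_univ, true_and, Finset.mem_map_equiv]
  simp only [Equiv.addRight_symm, Equiv.coe_addRight, gam]
  have : ∀ o : Option (ZMod p), o.map (· + 1) = some e ↔ o = some (e + -1) := by
    intro o
    cases o with
    | none => simp
    | some a => simp [← sub_eq_add_neg, eq_sub_iff_add_eq]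
  simp only [this]

theorem cs_mono (A : Finset ℕ) (k : ℕ) (c : Finset ℕ → ℕ) {X Y : Vt p} (h : vle X Y) (q : ℕ) :
    cs A k c X q ⊆ cs A k c Y q := by
  intro e
  simp only [cs, Finset.mem_filter, Finset.mem_univ, true_and]
  rintro ⟨S, h1, h2, h3⟩
  refine ⟨S, h1, h2, fun x hx => ?_⟩
  rw [h x (by rw [h3 x hx]; simp), h3 x hx]

noncomputable def sel (B : ℕ → Finset (ZMod p)) : ZMod p := bary (B (sInf {q | (B q).Nonempty}))

theorem core_prime : Core p := by
  intro A k t c hk hA hc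
  by_contra hcon
  push Not at hcon
  have hprop : ∀ (X : Vt p) q, (cs A k c X q).card < p := by
    intro X q
    have h1 : (cs A k c X q).card ≤ p := by
      simpa [ZMod.card] using Finset.card_le_univ (cs A k c X q)
    refine lt_of_le_of_ne h1 fun h2 => ?_
    have h3 : cs A k c X q = Finset.univ := by
      apply Finset.eq_univ_of_card
      rw [h2, ZMod.card]
    have h4 : ∀ e : ZMod p, ∃ S, St A k S ∧ c S = q ∧ ∀ x ∈ S, X.1 x = some e := by
      intro e
      have : e ∈ cs A k c X q := by rw [h3]; simp
      simpa [cs] using this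
    choose E hE1 hE2 hE3 using h4
    have hinj : Function.Injective (fun i : Fin p => ((i : ℕ) : ZMod p)) := by
      intro i j hij
      have := (ZMod.natCast_eq_natCast_iff' _ _ _).1 hij
      rw [Nat.mod_eq_of_lt i.2, Nat.mod_eq_of_lt j.2] at this
      exact Fin.ext this
    obtain ⟨i, hi⟩ := hcon (fun i => E (i : ℕ)) (fun i => hE1 _) (by
      intro i j hij
      rw [Finset.disjoint_left]
      intro x hx hx'
      have h5 := hE3 _ x hx
      rw [hE3 _ x hx'] at h5
      exact hij (hinj (Option.some.inj h5)).symm) q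
    exact hi (hE2 _)
  have hne : ∀ X : Vt p, p * (k - 1) < alt A X → ∃ q, q < t ∧ (cs A k c X q).Nonempty := by
    intro X hX
    obtain ⟨S, e, h1, h2⟩ := exists_St hX
    refine ⟨c S, hc S h1, e, ?_⟩
    simp only [cs, Finset.mem_filter, Finset.mem_univ, true_and]
    exact ⟨S, h1, rfl, h2⟩
  have hbig : ∀ (X : Vt p) q, t ≤ q → cs A k c X q = ∅ := by
    intro X q hq
    by_contra h
    obtain ⟨e, he⟩ := Finset.nonempty_iff_ne_empty.2 h
    simp only [cs, Finset.mem_filter, Finset.mem_univ, true_and] at he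
    obtain ⟨S, h1, h2, h3⟩ := he
    have := hc S h1
    omega
  let s : Vt p → ZMod p := fun X =>
    if alt A X ≤ p * (k - 1) then fs X else sel (cs A k c X)
  let F : Vt p → ℕ := fun X => ∑ q ∈ range t, (cs A k c X q).card
  let L : Vt p → ℕ := fun X =>
    if alt A X ≤ p * (k - 1) then alt A X else p * (k - 1) + F X
  have hp2 := hp.out.two_le
  have := tucker' A s ?_ L (p * (k - 1) + (p - 1) * t) ?_ ?_
  · omega
  · intro X
    simp only [s, alt_gam]
    split_ifs with h
    · exact fs_gam X
    · have hB : cs A k c (gam X) = fun q => shf (cs A k c X q) := by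
        funext q; exact cs_gam A k c X q
      rw [hB]
      unfold sel
      have hn : ∀ B : Finset (ZMod p), (shf B).Nonempty ↔ B.Nonempty := by
        intro B; simp [shf]
      simp only [hn]
      apply bary_shf _ _ (hprop X _)
      obtain ⟨q, -, hq⟩ := hne X (by omega)
      exact Nat.sInf_mem (s := {q | (cs A k c X q).Nonempty}) ⟨q, hq⟩
  · intro X hX
    simp only [L]
    have hpos := alt_pos hX
    split_ifs with h
    · constructor
      · exact hpos
      · exact h.trans (Nat.le_add_right _ _)
    · obtain ⟨q, hqt, hq⟩ := hne X (by omega)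
      have h1 : (cs A k c X q).card ≤ F X :=
        Finset.single_le_sum (f := fun q => (cs A k c X q).card) (fun _ _ => Nat.zero_le _)
          (Finset.mem_range.2 hqt)
      have h2 := hq.card_pos
      have h3 : F X ≤ ∑ q ∈ range t, (p - 1) := by
        apply Finset.sum_le_sum
        intro q _
        have := hprop X q
        omega
      simp only [Finset.sum_const, Finset.card_range, smul_eq_mul] at h3
      rw [mul_comm] at h3
      constructor
      · omega
      · omega
  · intro X Y hX hY hXY
    have hF : F X ≤ F Y := Finset.sum_le_sum (fun q _ => Finset.card_le_card (cs_mono A k c hXY q))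
    have ha := alt_mono A hXY
    simp only [L, s]
    split_ifs with h1 h2 h2
    · exact ⟨ha, fun h => fs_eq hX hY hXY h⟩
    · obtain ⟨q, hqt, hq⟩ := hne Y (by omega)
      have h3 : (cs A k c Y q).card ≤ F Y :=
        Finset.single_le_sum (f := fun q => (cs A k c Y q).card) (fun _ _ => Nat.zero_le _)
          (Finset.mem_range.2 hqt)
      have h4 := hq.card_pos
      constructor
      · omega
      · intro h; omega
    · omega
    · refine ⟨by omega, fun h => ?_⟩
      have hFe : F X = F Y := by omega
      have h5 := (Finset.sum_eq_sum_iff_of_le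
        (fun q _ => Finset.card_le_card (cs_mono A k c hXY q))).1 hFe
      have h6 : cs A k c X = cs A k c Y := by
        funext q
        by_cases hq : q < t
        · exact Finset.eq_of_subset_of_card_le (cs_mono A k c hXY q)
            (h5 q (Finset.mem_range.2 hq)).ge
        · rw [hbig X q (by omega), hbig Y q (by omega)]
      rw [h6]

end prime

theorem core_mul {a b : ℕ} (ha2 : 2 ≤ a) (hb2 : 2 ≤ b) (ha : Core a) (hb : Core b) :
    Core (a * b) := by
  classical
  intro A k t c hk hA hc
  set m := (a - 1) * t + a * (k - 1) + 1 with hm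
  have key : ∀ B : Finset ℕ, B ⊆ A → B.card = m → ∃ q, q < t ∧ ∃ E : Fin a → Finset ℕ,
      (∀ i, St B k (E i)) ∧ (∀ i j, i ≠ j → Disjoint (E i) (E j)) ∧ ∀ i, c (E i) = q := by
    intro B hBA hB
    have hc' : ∀ S, St B k S → c S < t := by
      intro S hS
      apply hc
      refine ⟨hS.1.trans hBA, hS.2.1, fun x hx y hy hxy => ?_⟩
      obtain ⟨z, hz, h⟩ := hS.2.2 x hx y hy hxy
      exact ⟨z, hBA hz, h⟩
    obtain ⟨E, h1, h2, q, h3⟩ := ha B k t c hk hB.ge hc'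
    refine ⟨q, ?_, E, h1, h2, h3⟩
    have := hc' _ (h1 ⟨0, by omega⟩)
    rwa [h3] at this
  choose! d hd E hE1 hE2 hE3 using key
  obtain ⟨G, g1, g2, q, g3⟩ := hb A m t d (by omega) (by
    have e1 : m - 1 = (a - 1) * t + a * (k - 1) := by omega
    rw [e1]
    obtain ⟨a, rfl⟩ := Nat.exists_eq_add_of_le ha2
    obtain ⟨b, rfl⟩ := Nat.exists_eq_add_of_le hb2
    have e2 : (2 + a) * (2 + b) - 1 = 3 + 2 * a + 2 * b + a * b := by
      have : (2 + a) * (2 + b) = 4 + 2 * a + 2 * b + a * b := by ring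
      omega
    have e3 : 2 + a - 1 = 1 + a := by omega
    have e4 : 2 + b - 1 = 1 + b := by omega
    rw [e2] at hA
    rw [e3, e4]
    refine le_trans (le_of_eq ?_) hA
    ring) (fun S hS => hd S hS.1 hS.2.1)
  let φ := finProdFinEquiv (m := a) (n := b)
  refine ⟨fun i => E (G (φ.symm i).2) (φ.symm i).1, ?_, ?_, q, ?_⟩
  · intro i
    have hS := hE1 (G (φ.symm i).2) (g1 _).1 (g1 _).2.1 (φ.symm i).1
    refine ⟨hS.1.trans (g1 _).1, hS.2.1, fun x hx y hy hxy => ?_⟩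
    obtain ⟨z, hz, h⟩ := hS.2.2 x hx y hy hxy
    exact ⟨z, (g1 _).1 hz, h⟩
  · intro i j hij
    by_cases h : (φ.symm i).2 = (φ.symm j).2
    · simp only [h]
      apply hE2 _ (g1 _).1 (g1 _).2.1
      intro h'
      apply hij
      apply φ.symm.injective
      exact Prod.ext h' h
    · exact (g2 _ _ h).mono (hE1 _ (g1 _).1 (g1 _).2.1 _).1 (hE1 _ (g1 _).1 (g1 _).2.1 _).1
  · intro i
    simp only
    rw [hE3 _ (g1 _).1 (g1 _).2.1, g3]

theorem core_all (r : ℕ) (hr : 2 ≤ r) : Core r := by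
  induction r using Nat.strong_induction_on with
  | _ r ih =>
    by_cases hpr : r.Prime
    · have : Fact r.Prime := ⟨hpr⟩
      exact core_prime
    · obtain ⟨a, ha, hab, har⟩ := (Nat.not_prime_iff_exists_dvd_lt hr).1 hpr
      obtain ⟨b, rfl⟩ := ha
      have hb : 2 ≤ b := by
        by_contra h
        have : b = 0 ∨ b = 1 := by omega
        rcases this with rfl | rfl <;> omega
      exact core_mul hab hb (ih a har hab) (ih b (by nlinarith) hb)

end KnS

theorem stmt6 (n k r : ℕ) (hn : 1 ≤ n) (hk : 1 ≤ k) (hr : 2 ≤ r) (hnrk : r * k ≤ n) :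
    ((n : ℚ) - (r : ℚ) * ((k : ℚ) - 1) - 1) / ((r : ℚ) - 1)
      ≤ (kneserChrom n r (stableSets n 2 k) : ℚ) := by
  classical
  have hne : {t | ∃ c, IsKneserColoring n r t (stableSets n 2 k) c}.Nonempty := by
    let e := Fintype.equivFin (Finset (Fin n))
    refine ⟨Fintype.card (Finset (Fin n)), fun A => (e A : ℕ) + 1, ?_, ?_⟩
    · intro A _
      have := (e A).2
      simp only [Finset.mem_Icc]
      omega
    · rintro E _ hE _ ⟨i, hi⟩
      have : E.card ≤ 1 := by
        rw [Finset.card_le_one]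
        intro A hA B hB
        have h1 := hi A hA
        have h2 := hi B hB
        simp only at h1 h2
        apply e.injective
        apply Fin.ext
        omega
      omega
  obtain ⟨c, hc1, hc2⟩ : ∃ c, IsKneserColoring n r (kneserChrom n r (stableSets n 2 k))
      (stableSets n 2 k) c := Nat.sInf_mem hne
  set t := kneserChrom n r (stableSets n 2 k) with ht
  by_contra hcon
  push Not at hcon
  have hr' : (0 : ℚ) < (r : ℚ) - 1 := by
    have : (2 : ℚ) ≤ r := by exact_mod_cast hr
    linarith
  rw [lt_div_iff₀ hr'] at hcon
  have hlt : (r - 1) * t + r * (k - 1) + 1 ≤ n - 1 := by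
    have h : (r - 1) * t + r * (k - 1) + 1 < n := by
      zify [show 1 ≤ r by omega, hk]
      have : (t : ℚ) * (r - 1) + r * (k - 1) + 1 < n := by linarith
      have h' : (t : ℤ) * (r - 1) + r * (k - 1) + 1 < n := by exact_mod_cast this
      linarith
    omega
  let lift : Finset ℕ → Finset (Fin n) := fun S => Finset.univ.filter (fun i => i.val ∈ S)
  have hlift : ∀ S, KnS.St (range (n - 1)) k S → lift S ∈ stableSets n 2 k := by
    intro S hS
    have hlt : ∀ x ∈ S, x < n - 1 := fun x hx => Finset.mem_range.1 (hS.1 hx)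
    simp only [stableSets, Finset.mem_filter, Finset.mem_univ, true_and]
    constructor
    · rw [← hS.2.1]
      apply Finset.card_bij (fun i _ => i.val)
      · intro i hi; simpa [lift] using hi
      · intro i _ j _ h; exact Fin.ext h
      · intro x hx
        have := hlt x hx
        exact ⟨⟨x, by omega⟩, by simpa [lift] using hx, rfl⟩
    · intro i hi j hj hij
      simp only [lift, Finset.mem_filter, Finset.mem_univ, true_and] at hi hj
      have h1 := hlt _ hi
      have h2 := hlt _ hj
      have h3 : i.val ≠ j.val := fun h => hij (Fin.ext h)
      rcases lt_or_gt_of_ne h3 with h | h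
      · obtain ⟨z, -, hz⟩ := hS.2.2 _ hi _ hj h
        omega
      · obtain ⟨z, -, hz⟩ := hS.2.2 _ hj _ hi h
        omega
  obtain ⟨E, hE1, hE2, q, hE3⟩ := KnS.core_all r hr (range (n - 1)) k t (fun S => c (lift S) - 1) hk
    (by simpa using hlt) (by
      intro S hS
      have := Finset.mem_Icc.1 (hc1 _ (hlift S hS))
      omega)
  have hdisj : ∀ i j, i ≠ j → Disjoint (lift (E i)) (lift (E j)) := by
    intro i j hij
    rw [Finset.disjoint_left]
    intro x hx hx'
    simp only [lift, Finset.mem_filter, Finset.mem_univ, true_and] at hx hx'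
    exact Finset.disjoint_left.1 (hE2 i j hij) hx hx'
  have hcard : ∀ i, (lift (E i)).card = k := by
    intro i
    have := hlift _ (hE1 i)
    simp only [stableSets, Finset.mem_filter, Finset.mem_univ, true_and] at this
    exact this.1
  have hinj : Function.Injective (fun i => lift (E i)) := by
    intro i j hij
    by_contra hne
    have h1 := hdisj i j hne
    simp only at hij
    rw [hij, Finset.disjoint_self_iff_empty] at h1
    have := hcard j
    rw [h1] at this
    simp at this
    omega
  apply hc2 (Finset.univ.image (fun i => lift (E i)))
  · intro A hA
    obtain ⟨i, -, rfl⟩ := Finset.mem_image.1 hA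
    exact hlift _ (hE1 i)
  · rw [Finset.card_image_of_injective _ hinj]; simp
  · intro A hA B hB hAB
    simp only [Finset.coe_image, Finset.coe_univ, Set.image_univ, Set.mem_range] at hA hB
    obtain ⟨i, rfl⟩ := hA
    obtain ⟨j, rfl⟩ := hB
    exact hdisj i j (fun h => hAB (by rw [h]))
  · refine ⟨q + 1, ?_⟩
    intro A hA
    obtain ⟨i, -, rfl⟩ := Finset.mem_image.1 hA
    have := Finset.mem_Icc.1 (hc1 _ (hlift _ (hE1 i)))
    have h3 := hE3 i
    omega
end

section
/- (Schrijver) For all positive integers n and k with n ≥ 2k, the chromatic number of the graph KG^2(n,k)_{2-stab} (the Schrijver graph, whose vertices are the 2-stable k-subsets of [n] with two vertices adjacent when disjoint) equals n − 2k + 2. -/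
open Finset

/-- valid nonzero sign vectors -/
def SVValid (n : ℕ) (P N : Finset ℕ) : Prop :=
  Disjoint P N ∧ P ∪ N ⊆ range n ∧ (P ∪ N).Nonempty

/-- pullback along joining with the label `l` -/
def joinLab (l : ℤ) (f : Finset ℤ → ZMod 2) : Finset ℤ → ZMod 2 :=
  fun S => if l ∈ S then 0 else f (insert l S)

/-- coboundary -/
def cobd (f : Finset ℤ → ZMod 2) : Finset ℤ → ZMod 2 :=
  fun S => ∑ s ∈ S, f (S.erase s)

/-- evaluates a cochain on the label image of the sum of all saturated flags below `(P,N)` -/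
def flagEval (lam : Finset ℕ → Finset ℕ → ℤ) :
    ℕ → Finset ℕ → Finset ℕ → (Finset ℤ → ZMod 2) → ZMod 2
  | 0, _, _, f => f ∅
  | r + 1, P, N, f => ∑ i ∈ P ∪ N, flagEval lam r (P.erase i) (N.erase i) (joinLab (lam P N) f)

lemma joinLab_add (l : ℤ) (f g : Finset ℤ → ZMod 2) :
    joinLab l (f + g) = joinLab l f + joinLab l g := by
  funext S; simp only [joinLab, Pi.add_apply]; split_ifs <;> simp

lemma flagEval_add (lam : Finset ℕ → Finset ℕ → ℤ) (r : ℕ) : ∀ (P N : Finset ℕ)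
    (f g : Finset ℤ → ZMod 2),
    flagEval lam r P N (f + g) = flagEval lam r P N f + flagEval lam r P N g := by
  induction r with
  | zero => intro P N f g; rfl
  | succ r ih =>
    intro P N f g
    simp only [flagEval, joinLab_add, ih, Finset.sum_add_distrib]

lemma zmod2_add_self (a : ZMod 2) : a + a = 0 := CharTwo.add_self_eq_zero a

lemma joinLab_cobd (l : ℤ) (f : Finset ℤ → ZMod 2) :
    joinLab l (cobd f) = f + cobd (joinLab l f) := by
  funext S
  simp only [joinLab, cobd, Pi.add_apply]
  by_cases h : l ∈ S
  · rw [if_pos h, ← Finset.add_sum_erase _ _ h]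
    rw [Finset.sum_eq_zero]
    · simp [Finset.insert_erase h, zmod2_add_self]
    · intro x hx
      rw [if_pos]
      simp only [mem_erase] at hx ⊢
      exact ⟨fun e => hx.1 e.symm, h⟩
  · rw [if_neg h, Finset.sum_insert h, Finset.erase_insert h]
    congr 1
    apply Finset.sum_congr rfl
    intro x hx
    have hxl : l ≠ x := fun e => h (e ▸ hx)
    rw [if_neg (by simp [h]), Finset.erase_insert_of_ne hxl]

/-- double sum over ordered pairs of a symmetric function vanishes mod 2 -/
lemma sum_pairs_zero (T : Finset ℕ) (g : ℕ → ℕ → ZMod 2) (hg : ∀ i j, g i j = g j i) :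
    ∑ i ∈ T, ∑ j ∈ T.erase i, g i j = 0 := by
  induction T using Finset.induction_on with
  | empty => simp
  | insert a T ha ih =>
    rw [Finset.sum_insert ha, Finset.erase_insert ha]
    have : ∀ i ∈ T, ∑ j ∈ (insert a T).erase i, g i j = g i a + ∑ j ∈ T.erase i, g i j := by
      intro i hi
      have hai : a ≠ i := fun e => ha (e ▸ hi)
      rw [Finset.erase_insert_of_ne hai, Finset.sum_insert (by simp [ha])]
    rw [Finset.sum_congr rfl this, Finset.sum_add_distrib, ih, add_zero,
      Finset.sum_congr rfl (fun i _ => hg i a), zmod2_add_self]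

lemma flagEval_cobd (lam : Finset ℕ → Finset ℕ → ℤ) (r : ℕ) : ∀ (P N : Finset ℕ)
    (f : Finset ℤ → ZMod 2),
    flagEval lam (r + 1) P N (cobd f) =
      ∑ i ∈ P ∪ N, flagEval lam r (P.erase i) (N.erase i) f := by
  induction r with
  | zero =>
    intro P N f
    simp only [flagEval, joinLab_cobd, Pi.add_apply]
    simp [cobd]
  | succ r ih =>
    intro P N f
    rw [flagEval]
    simp only [joinLab_cobd, flagEval_add, Finset.sum_add_distrib]
    simp only [ih, ← Finset.erase_union_distrib]
    rw [sum_pairs_zero (P ∪ N) (fun i j => flagEval lam r ((P.erase i).erase j)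
      ((N.erase i).erase j) (joinLab (lam P N) f)), add_zero]
    intro i j
    simp only [Finset.erase_right_comm]

def GoodLab (lam : Finset ℕ → Finset ℕ → ℤ) (r : ℕ) (P N : Finset ℕ) (S : Finset ℤ) : Prop :=
  S.card = r ∧ (∀ s ∈ S, ∃ P' N', P' ⊆ P ∧ N' ⊆ N ∧ (P' ∪ N').Nonempty ∧ lam P' N' = s) ∧
    ∀ s ∈ S, -s ∉ S

lemma SVValid.sub {n : ℕ} {P N P' N' : Finset ℕ} (h : SVValid n P N) (hP : P' ⊆ P) (hN : N' ⊆ N)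
    (hne : (P' ∪ N').Nonempty) : SVValid n P' N' :=
  ⟨h.1.mono hP hN, (Finset.union_subset_union hP hN).trans h.2.1, hne⟩

lemma flagEval_congr {n : ℕ} {lam : Finset ℕ → Finset ℕ → ℤ}
    (h0 : ∀ P N, SVValid n P N → lam P N ≠ 0)
    (hc : ∀ P N P' N', SVValid n P N → SVValid n P' N' → P ⊆ P' → N ⊆ N' →
      lam P N ≠ - lam P' N') (r : ℕ) : ∀ (P N : Finset ℕ) (f g : Finset ℤ → ZMod 2),
    Disjoint P N → P ∪ N ⊆ range n →
    (∀ S, GoodLab lam r P N S → f S = g S) →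
    flagEval lam r P N f = flagEval lam r P N g := by
  induction r with
  | zero =>
    intro P N f g _ _ h
    exact h ∅ ⟨by simp, by simp, by simp⟩
  | succ r ih =>
    intro P N f g hd hr h
    rw [flagEval, flagEval]
    apply Finset.sum_congr rfl
    intro i hi
    have hv : SVValid n P N := ⟨hd, hr, ⟨i, hi⟩⟩
    apply ih
    · exact hd.mono (erase_subset _ _) (erase_subset _ _)
    · exact (Finset.union_subset_union (erase_subset _ _) (erase_subset _ _)).trans hr
    · rintro S ⟨hS1, hS2, hS3⟩
      simp only [joinLab]
      split_ifs with hl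
      · rfl
      · apply h
        have hS2' : ∀ s ∈ S, ∃ P' N', P' ⊆ P ∧ N' ⊆ N ∧ (P' ∪ N').Nonempty ∧ lam P' N' = s := by
          intro s hs
          obtain ⟨P', N', a, b, c, d⟩ := hS2 s hs
          exact ⟨P', N', a.trans (erase_subset _ _), b.trans (erase_subset _ _), c, d⟩
        have key : -lam P N ∉ S := by
          intro hm
          obtain ⟨P', N', a, b, c, d⟩ := hS2' _ hm
          exact hc P' N' P N (hv.sub a b c) hv a b d
        have hz := h0 P N hv
        refine ⟨by rw [card_insert_of_notMem hl, hS1], ?_, ?_⟩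
        · intro s hs
          rcases mem_insert.1 hs with rfl | hs
          · exact ⟨P, N, Subset.rfl, Subset.rfl, ⟨i, hi⟩, rfl⟩
          · exact hS2' s hs
        · intro s hs hs'
          rcases mem_insert.1 hs with e | hs
          · subst e
            rcases mem_insert.1 hs' with e | hs'
            · omega
            · exact key hs'
          · rcases mem_insert.1 hs' with e | hs'
            · apply key; rw [← e]; simpa using hs
            · exact hS3 s hs hs'

lemma flagEval_neg {n : ℕ} {lam : Finset ℕ → Finset ℕ → ℤ}
    (hneg : ∀ P N, SVValid n P N → lam N P = - lam P N) (r : ℕ) :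
    ∀ (P N : Finset ℕ) (f : Finset ℤ → ZMod 2),
    Disjoint P N → P ∪ N ⊆ range n →
    flagEval lam r N P f = flagEval lam r P N (fun S => f (S.image (fun x => -x))) := by
  induction r with
  | zero => intro P N f _ _; simp [flagEval]
  | succ r ih =>
    intro P N f hd hr
    rw [flagEval, flagEval, Finset.union_comm N P]
    apply Finset.sum_congr rfl
    intro i hi
    have hv : SVValid n P N := ⟨hd, hr, ⟨i, hi⟩⟩
    rw [ih _ _ _ (hd.mono (erase_subset _ _) (erase_subset _ _))
      ((Finset.union_subset_union (erase_subset _ _) (erase_subset _ _)).trans hr)]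
    congr 1
    funext S
    simp [joinLab, hneg P N hv, Finset.image_insert]

/-- alternating indicator, by sign of the label of largest absolute value -/
def altInd : ℕ → Bool → Finset ℤ → ZMod 2
  | 0, _, _ => 1
  | m + 1, b, S =>
    if ((m : ℤ) + 1) ∈ S then (if b then altInd m (!b) S else 0)
    else if (-((m : ℤ) + 1)) ∈ S then (if b then 0 else altInd m (!b) S)
    else altInd m b S

lemma altInd_erase (m : ℕ) : ∀ (b : Bool) (S : Finset ℤ) (x : ℤ), (m : ℤ) < |x| →
    altInd m b (S.erase x) = altInd m b S := by
  induction m with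
  | zero => intros; rfl
  | succ m ih =>
    intro b S x hx
    push_cast at hx
    have h1 : (m : ℤ) + 1 ≠ x := by rintro rfl; rw [abs_of_nonneg] at hx <;> omega
    have h2 : -((m : ℤ) + 1) ≠ x := by rintro rfl; rw [abs_neg, abs_of_nonneg] at hx <;> omega
    have h3 : (m : ℤ) < |x| := by omega
    simp only [altInd, mem_erase, ih _ _ _ h3, h1, h2, ne_eq, not_false_eq_true, true_and]

lemma altInd_neg (m : ℕ) : ∀ (b : Bool) (S : Finset ℤ), (∀ s ∈ S, -s ∉ S) →
    altInd m b (S.image (fun x => -x)) = altInd m (!b) S := by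
  induction m with
  | zero => intros; rfl
  | succ m ih =>
    intro b S hS
    have e1 : ∀ x : ℤ, x ∈ S.image (fun x => -x) ↔ -x ∈ S := by
      intro x; simp only [mem_image]
      constructor
      · rintro ⟨a, ha, rfl⟩; simpa using ha
      · intro h; exact ⟨_, h, by simp⟩
    simp only [altInd, e1, ih _ _ hS, neg_neg]
    have := hS ((m : ℤ) + 1)
    cases b <;> by_cases h1 : ((m : ℤ) + 1) ∈ S <;> by_cases h2 : (-((m : ℤ) + 1)) ∈ S <;>
      simp_all

lemma altInd_cobd (m : ℕ) : ∀ (b : Bool) (S : Finset ℤ), (∀ s ∈ S, -s ∉ S) → (∀ s ∈ S, s ≠ 0) →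
    ∑ s ∈ S with |s| ≤ (m : ℤ), altInd m b (S.erase s) = altInd m true S + altInd m false S := by
  induction m with
  | zero =>
    intro b S _ h0
    rw [Finset.filter_eq_empty_iff.2]
    · simp [altInd]; rfl
    · intro x hx h
      exact h0 x hx (abs_nonpos_iff.1 (by simpa using h))
  | succ m ih =>
    intro b S hS h0
    have hsp : ∀ x : ℤ, |x| ≤ ((m + 1 : ℕ) : ℤ) ↔ (|x| ≤ (m : ℤ) ∨ x = m + 1 ∨ x = -(m + 1)) := by
      intro x; push_cast; rcases abs_cases x with h | h <;> omega
    have hih := fun b => ih b S hS h0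
    have hne : ∀ x : ℤ, |x| ≤ (m : ℤ) → ((m : ℤ) + 1 ≠ x ∧ (-((m : ℤ) + 1)) ≠ x) := by
      intro x hx
      rcases abs_cases x with h | h <;> omega
    have hbig1 : (m : ℤ) < |(m : ℤ) + 1| := by rw [abs_of_nonneg] <;> omega
    have hbig2 : (m : ℤ) < |(-((m : ℤ) + 1))| := by rw [abs_neg, abs_of_nonneg] <;> omega
    by_cases h1 : ((m : ℤ) + 1) ∈ S
    · have h2 : (-((m : ℤ) + 1)) ∉ S := hS _ h1
      have hf : S.filter (fun x => |x| ≤ ((m + 1 : ℕ) : ℤ)) =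
          insert ((m : ℤ) + 1) (S.filter (fun x => |x| ≤ (m : ℤ))) := by
        ext x; simp only [mem_filter, hsp, mem_insert]
        constructor
        · rintro ⟨a, b | b | b⟩
          · exact Or.inr ⟨a, b⟩
          · exact Or.inl b
          · exact absurd (b ▸ a) h2
        · rintro (rfl | ⟨a, b⟩)
          · exact ⟨h1, by simp⟩
          · exact ⟨a, Or.inl b⟩
      rw [hf, Finset.sum_insert (by simp only [mem_filter, not_and, not_le]; exact fun _ => hbig1)]
      have hs : ∀ s ∈ S.filter (fun x => |x| ≤ (m : ℤ)), altInd (m + 1) b (S.erase s) =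
          if b then altInd m (!b) (S.erase s) else 0 := by
        intro s hs
        have := hne s (mem_filter.1 hs).2
        simp only [altInd, mem_erase]
        rw [if_pos ⟨this.1, h1⟩]
      rw [Finset.sum_congr rfl hs]
      simp only [altInd, mem_erase, h1, h2, altInd_erase m _ _ _ hbig1]
      cases b
      · simp
      · simp only [Bool.not_true, if_true, hih]
        simp
        rw [← add_assoc, zmod2_add_self, zero_add]
    · by_cases h2 : (-((m : ℤ) + 1)) ∈ S
      · have hf : S.filter (fun x => |x| ≤ ((m + 1 : ℕ) : ℤ)) =
            insert (-((m : ℤ) + 1)) (S.filter (fun x => |x| ≤ (m : ℤ))) := by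
          ext x; simp only [mem_filter, hsp, mem_insert]
          constructor
          · rintro ⟨a, b | b | b⟩
            · exact Or.inr ⟨a, b⟩
            · exact absurd (b ▸ a) h1
            · exact Or.inl b
          · rintro (rfl | ⟨a, b⟩)
            · exact ⟨h2, by simp⟩
            · exact ⟨a, Or.inl b⟩
        rw [hf, Finset.sum_insert (by simp only [mem_filter, not_and, not_le]; exact fun _ => hbig2)]
        have hs : ∀ s ∈ S.filter (fun x => |x| ≤ (m : ℤ)), altInd (m + 1) b (S.erase s) =
            if b then 0 else altInd m (!b) (S.erase s) := by
          intro s hs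
          have := hne s (mem_filter.1 hs).2
          simp only [altInd, mem_erase]
          rw [if_neg (fun h => h1 h.2), if_pos ⟨this.2, h2⟩]
        rw [Finset.sum_congr rfl hs]
        simp only [altInd, mem_erase, h1, h2, altInd_erase m _ _ _ hbig2]
        cases b
        · simp
          rw [hih, add_comm (altInd m true S), ← add_assoc, zmod2_add_self, zero_add]
        · simp
      · have hf : S.filter (fun x => |x| ≤ ((m + 1 : ℕ) : ℤ)) =
            (S.filter (fun x => |x| ≤ (m : ℤ))) := by
          ext x; simp only [mem_filter, hsp]
          constructor
          · rintro ⟨a, b | b | b⟩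
            · exact ⟨a, b⟩
            · exact absurd (b ▸ a) h1
            · exact absurd (b ▸ a) h2
          · rintro ⟨a, b⟩
            exact ⟨a, Or.inl b⟩
        rw [hf]
        simp only [altInd, mem_erase, h1, h2, and_false, if_false]
        exact hih b

theorem octTucker {n m : ℕ} {lam : Finset ℕ → Finset ℕ → ℤ}
    (h0 : ∀ P N, SVValid n P N → lam P N ≠ 0)
    (hm : ∀ P N, SVValid n P N → |lam P N| ≤ (m : ℤ))
    (hneg : ∀ P N, SVValid n P N → lam N P = - lam P N)
    (hc : ∀ P N P' N', SVValid n P N → SVValid n P' N' → P ⊆ P' → N ⊆ N' →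
      lam P N ≠ - lam P' N') : n ≤ m := by
  have main : ∀ d, d ≤ n →
      ∑ P ∈ (range d).powerset, flagEval lam d P (range d \ P) (altInd m true) = 1 := by
    intro d
    induction d with
    | zero =>
      intro _
      have h1 : ∀ k b, altInd k b ∅ = 1 := by
        intro k; induction k with
        | zero => intros; rfl
        | succ k ih => intro b; simp [altInd, ih]
      simp [flagEval, h1]
    | succ d ih =>
      intro hd
      have hdn : range (d + 1) ⊆ range n := Finset.range_subset_range.2 hd
      rw [← ih (by omega)]
      have hins : range (d + 1) = insert d (range d) := Finset.range_add_one
      rw [hins, Finset.sum_powerset_insert (by simp)]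
      have e1 : ∀ P ∈ (range d).powerset, flagEval lam (d + 1) P (insert d (range d) \ P)
          (altInd m true) = flagEval lam (d + 1) P (insert d (range d \ P)) (altInd m true) := by
        intro P hP
        rw [Finset.insert_sdiff_of_notMem _ (fun h => by
          have := mem_powerset.1 hP h; simp at this)]
      have e2 : ∀ P ∈ (range d).powerset, flagEval lam (d + 1) (insert d P)
          (insert d (range d) \ insert d P) (altInd m true) =
          flagEval lam (d + 1) (insert d P) (range d \ P) (altInd m true) := by
        intro P hP
        congr 1
        ext x; simp only [mem_sdiff, mem_insert, mem_range]
        by_cases hx : x = d <;> simp [hx]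
      rw [Finset.sum_congr rfl e1, Finset.sum_congr rfl e2]
      have e3 : ∑ P ∈ (range d).powerset,
            flagEval lam (d + 1) P (insert d (range d \ P)) (altInd m true) =
          ∑ P ∈ (range d).powerset,
            flagEval lam (d + 1) (range d \ P) (insert d P) (altInd m true) := by
        refine Finset.sum_nbij' (fun P => range d \ P) (fun P => range d \ P) ?_ ?_ ?_ ?_ ?_
        · intro P _; simp
        · intro P _; simp
        · intro P hP; exact Finset.sdiff_sdiff_eq_self (mem_powerset.1 hP)
        · intro P hP; exact Finset.sdiff_sdiff_eq_self (mem_powerset.1 hP)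
        · intro P hP; simp only [Finset.sdiff_sdiff_eq_self (mem_powerset.1 hP)]
      rw [e3, ← Finset.sum_add_distrib]
      have e4 : ∀ P ∈ (range d).powerset,
          flagEval lam (d + 1) (range d \ P) (insert d P) (altInd m true) +
            flagEval lam (d + 1) (insert d P) (range d \ P) (altInd m true) =
          ∑ i ∈ insert d (range d), flagEval lam d ((insert d P).erase i) ((range d \ P).erase i)
            (altInd m true) := by
        intro P hP
        have hPd := mem_powerset.1 hP
        have hun : insert d P ∪ (range d \ P) = insert d (range d) := by
          rw [Finset.insert_union, Finset.union_sdiff_of_subset hPd]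
        have hdis : Disjoint (insert d P) (range d \ P) := by
          rw [Finset.disjoint_left]
          intro x hx hx'
          simp only [mem_insert, mem_sdiff, mem_range] at hx hx'
          rcases hx with rfl | hx
          · omega
          · exact hx'.2 hx
        have hsub : insert d P ∪ (range d \ P) ⊆ range n := by rw [hun, ← hins]; exact hdn
        rw [flagEval_neg hneg _ _ _ _ hdis hsub, ← flagEval_add]
        rw [← hun, ← flagEval_cobd]
        apply flagEval_congr h0 hc _ _ _ _ _ hdis hsub
        rintro S ⟨hS1, hS2, hS3⟩
        have hval : ∀ s ∈ S, s ≠ 0 ∧ |s| ≤ (m : ℤ) := by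
          intro s hs
          obtain ⟨P', N', a, b, c, rfl⟩ := hS2 s hs
          have hv : SVValid n P' N' := SVValid.sub ⟨hdis, hsub, c.mono
            (Finset.union_subset_union a b)⟩ a b c
          exact ⟨h0 _ _ hv, hm _ _ hv⟩
        simp only [Pi.add_apply, altInd_neg m _ S hS3, cobd]
        rw [add_comm, Bool.not_true, ← altInd_cobd m true S hS3 (fun s hs => (hval s hs).1)]
        rw [Finset.filter_true_of_mem (fun s hs => (hval s hs).2)]
      rw [Finset.sum_congr rfl e4, Finset.sum_comm, Finset.sum_insert (by simp)]
      have e5 : ∀ i ∈ range d, ∑ P ∈ (range d).powerset, flagEval lam d ((insert d P).erase i)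
          ((range d \ P).erase i) (altInd m true) = 0 := by
        intro i hi
        have : range d = insert i ((range d).erase i) := (Finset.insert_erase hi).symm
        rw [this, Finset.sum_powerset_insert (by simp), ← this]
        have e6 : ∀ P ∈ ((range d).erase i).powerset, flagEval lam d ((insert d (insert i P)).erase i)
          ((range d \ insert i P).erase i) (altInd m true) = flagEval lam d ((insert d P).erase i)
          ((range d \ P).erase i) (altInd m true) := by
          intro P hP
          congr 1
          · ext x; simp only [mem_erase, mem_insert]; tauto
          · ext x; simp only [mem_erase, mem_insert, mem_sdiff]; tauto
        rw [Finset.sum_congr rfl e6, zmod2_add_self]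
      rw [Finset.sum_eq_zero e5, add_zero]
      apply Finset.sum_congr rfl
      intro P hP
      congr 1
      · exact Finset.erase_insert (fun h => by have := mem_powerset.1 hP h; simp at this)
      · exact Finset.erase_eq_of_notMem (by simp)
  by_contra hlt
  push Not at hlt
  have h1 := main n le_rfl
  rw [Finset.sum_eq_zero] at h1
  · exact absurd h1 (by decide)
  intro P hP
  have hPd := mem_powerset.1 hP
  have hdis : Disjoint P (range n \ P) := Finset.disjoint_sdiff
  have hsub : P ∪ (range n \ P) ⊆ range n := by rw [Finset.union_sdiff_of_subset hPd]
  have z : ∀ r P N, flagEval lam r P N 0 = 0 := by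
    intro r P N
    have := flagEval_add lam r P N 0 0
    simpa using this
  rw [flagEval_congr h0 hc _ _ _ _ 0 hdis hsub, z]
  rintro S ⟨hS1, hS2, hS3⟩
  exfalso
  have : S.card ≤ (Finset.Icc 1 m).card := by
    apply Finset.card_le_card_of_injOn Int.natAbs
    · intro s hs
      obtain ⟨P', N', a, b, c, rfl⟩ := hS2 s hs
      have hv : SVValid n P' N' := SVValid.sub ⟨hdis, hsub, c.mono
            (Finset.union_subset_union a b)⟩ a b c
      have h1 := h0 _ _ hv
      have h2 := hm _ _ hv
      simp only [coe_Icc, Set.mem_Icc]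
      rcases abs_cases (lam P' N') with h | h <;> omega
    · intro s hs t ht hst
      rcases Int.natAbs_eq_natAbs_iff.1 hst with h | h
      · exact h
      · exfalso; subst h; exact hS3 t ht hs
  simp at this
  omega

/-- longest alternating sequence of positions below `m`, ending in `P` -/
def altLen : Finset ℕ → Finset ℕ → ℕ → ℕ
  | _, _, 0 => 0
  | P, N, m + 1 => if m ∈ P then max (altLen P N m) (altLen N P m + 1) else altLen P N m

lemma altLen_mono (m : ℕ) : ∀ {P N P' N' : Finset ℕ}, P ⊆ P' → N ⊆ N' →
    altLen P N m ≤ altLen P' N' m := by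
  induction m with
  | zero => intros; simp [altLen]
  | succ m ih =>
    intro P N P' N' hP hN
    have h1 := ih hP hN
    have h2 := ih hN hP
    simp only [altLen]
    by_cases h : m ∈ P
    · rw [if_pos h, if_pos (hP h)]; omega
    · rw [if_neg h]; split_ifs <;> omega

lemma altLen_diff (m : ℕ) {P N : Finset ℕ} (hd : Disjoint P N) :
    (altLen P N m = 0 ∧ altLen N P m = 0 ∧ ∀ i < m, i ∉ P ∪ N) ∨
      altLen P N m = altLen N P m + 1 ∨ altLen N P m = altLen P N m + 1 := by
  induction m with
  | zero => left; simp [altLen]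
  | succ m ih =>
    simp only [altLen]
    by_cases h1 : m ∈ P
    · have h2 : m ∉ N := Finset.disjoint_left.1 hd h1
      rw [if_pos h1, if_neg h2]; omega
    · by_cases h2 : m ∈ N
      · rw [if_neg h1, if_pos h2]; omega
      · rw [if_neg h1, if_neg h2]
        rcases ih with ⟨a, b, c⟩ | h
        · left
          refine ⟨a, b, fun i hi => ?_⟩
          rcases Nat.lt_succ_iff_lt_or_eq.1 hi with h | rfl
          · exact c i h
          · simp [h1, h2]
        · right; exact h

lemma altLen_extract (m : ℕ) : ∀ {P N : Finset ℕ} {l : ℕ}, l ≤ altLen P N m →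
    ∃ f : ℕ → ℕ, (∀ j < l, f j < m) ∧ (∀ j, j + 1 < l → f (j + 1) < f j) ∧
      (∀ j < l, (j % 2 = 0 → f j ∈ P) ∧ (j % 2 = 1 → f j ∈ N)) := by
  induction m with
  | zero =>
    intro P N l h
    simp only [altLen] at h
    exact ⟨id, by intros; omega, by intros; omega, by intros; omega⟩
  | succ m ih =>
    intro P N l h
    by_cases hl : l ≤ altLen P N m
    · obtain ⟨f, a, b, c⟩ := ih hl
      exact ⟨f, fun j hj => (a j hj).trans (Nat.lt_succ_self m), b, c⟩
    · simp only [altLen] at h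
      split_ifs at h with hm
      · have h' : l - 1 ≤ altLen N P m := by omega
        obtain ⟨f, a, b, c⟩ := ih h'
        refine ⟨fun j => if j = 0 then m else f (j - 1), ?_, ?_, ?_⟩
        · intro j hj
          rcases j with _ | j
          · simp
          · have := a j (by omega)
            simp; omega
        · intro j hj
          rcases j with _ | j
          · simpa using a 0 (by omega)
          · simpa using b j (by omega)
        · intro j hj
          rcases j with _ | j
          · simp [hm]
          · have := c j (by omega)
            simp only [Nat.add_eq_zero_iff, one_ne_zero, and_false, if_false, Nat.add_sub_cancel]
            exact ⟨fun h => this.2 (by omega), fun h => this.1 (by omega)⟩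
      · omega

lemma mem_stableSets {n s k : ℕ} {A : Finset (Fin n)} :
    A ∈ stableSets n s k ↔ A.card = k ∧ Stable n s A := by
  simp [stableSets]

lemma stable_of_seq {n k : ℕ} (g : ℕ → ℕ) (e : ℕ) (he : e ≤ 1)
    (h1 : ∀ j < 2 * k, g j < n) (h2 : ∀ i j, i < j → j < 2 * k → g j < g i) (Q : Finset ℕ)
    (hQ : ∀ j < k, g (2 * j + e) ∈ Q) :
    ∃ A ∈ stableSets n 2 k, ∀ x ∈ A, x.val ∈ Q := by
  have hlt : ∀ j : Fin k, g (2 * j.val + e) < n := fun j => h1 _ (by omega)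
  let F : Fin k → Fin n := fun j => ⟨g (2 * j.val + e), hlt j⟩
  have key : ∀ i j : Fin k, i < j → (F j).val + 2 ≤ (F i).val ∧ (F i).val ≤ (F j).val + (n - 2)
      ∧ 2 ≤ n := by
    intro i j hij
    have hij' : i.val < j.val := hij
    have a1 := h2 (2 * i.val + e) (2 * i.val + e + 1) (by omega) (by omega)
    have a2 := h2 (2 * i.val + e + 1) (2 * j.val + e) (by omega) (by omega)
    have a3 := h1 (2 * i.val + e) (by omega)
    simp only [F]
    refine ⟨by omega, ?_, by omega⟩
    rcases Nat.lt_or_ge e 1 with h | h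
    · have := h2 (2 * j.val + e) (2 * j.val + e + 1) (by omega) (by omega)
      omega
    · have := h2 (2 * i.val) (2 * i.val + e) (by omega) (by omega)
      have := h1 (2 * i.val) (by omega)
      omega
  have hinj : Function.Injective F := by
    intro i j hij
    rcases lt_trichotomy i j with h | h | h
    · have := key i j h; rw [hij] at this; omega
    · exact h
    · have := key j i h; rw [hij] at this; omega
  refine ⟨Finset.univ.image F, mem_stableSets.2 ⟨?_, ?_⟩, ?_⟩
  · rw [Finset.card_image_of_injective _ hinj]; simp
  · intro x hx y hy hxy
    simp only [mem_image, mem_univ, true_and] at hx hy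
    obtain ⟨i, rfl⟩ := hx
    obtain ⟨j, rfl⟩ := hy
    rcases lt_trichotomy i j with h | h | h
    · have := key i j h; omega
    · exact absurd (by rw [h]) hxy
    · have := key j i h; omega
  · intro x hx
    simp only [mem_image, mem_univ, true_and] at hx
    obtain ⟨i, rfl⟩ := hx
    exact hQ _ i.2

lemma stable_of_altLen {n k : ℕ} {P N : Finset ℕ} (h : 2 * k ≤ altLen P N n) :
    (∃ A ∈ stableSets n 2 k, ∀ x ∈ A, x.val ∈ P) ∧
    (∃ A ∈ stableSets n 2 k, ∀ x ∈ A, x.val ∈ N) := by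
  obtain ⟨f, a, b, c⟩ := altLen_extract n h
  have h2 : ∀ i j, i < j → j < 2 * k → f j < f i := by
    intro i j hij
    induction j, hij using Nat.le_induction with
    | base => intro h; exact b i h
    | succ j hj ih => intro h; exact (b j h).trans (ih (by omega))
  exact ⟨stable_of_seq f 0 (by omega) a h2 P (fun j hj => (c _ (by omega)).1 (by omega)),
    stable_of_seq f 1 (by omega) a h2 N (fun j hj => (c _ (by omega)).2 (by omega))⟩

/-- the smallest color of a vertex inside `P` -/
noncomputable def minCol (n k : ℕ) (col : Finset (Fin n) → ℕ) (P : Finset ℕ) : ℕ :=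
  sInf {c | ∃ A ∈ stableSets n 2 k, (∀ x ∈ A, x.val ∈ P) ∧ col A = c}

lemma minCol_mem {n k : ℕ} (col : Finset (Fin n) → ℕ) {P : Finset ℕ}
    (h : ∃ A ∈ stableSets n 2 k, ∀ x ∈ A, x.val ∈ P) :
    ∃ A ∈ stableSets n 2 k, (∀ x ∈ A, x.val ∈ P) ∧ col A = minCol n k col P := by
  obtain ⟨A, hA, hP⟩ := h
  exact Nat.sInf_mem (s := {c | ∃ A ∈ stableSets n 2 k, (∀ x ∈ A, x.val ∈ P) ∧ col A = c})
    ⟨col A, A, hA, hP, rfl⟩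

/-- the Tucker labelling -/
noncomputable def tuckLab (n k : ℕ) (col : Finset (Fin n) → ℕ) (P N : Finset ℕ) : ℤ :=
  if altLen P N n < 2 * k ∧ altLen N P n < 2 * k then
    if altLen N P n < altLen P N n then (altLen P N n : ℤ) else -(altLen N P n : ℤ)
  else if minCol n k col P < minCol n k col N then 2 * k - 1 + (minCol n k col P : ℤ)
  else -(2 * k - 1 + (minCol n k col N : ℤ))

lemma schrijver_lower {n k t : ℕ} (hk : 1 ≤ k) (hn : 2 * k ≤ n) {col : Finset (Fin n) → ℕ}
    (hcol : IsKneserColoring n 2 t (stableSets n 2 k) col) : n ≤ 2 * k + t - 2 := by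
  obtain ⟨hr, hE⟩ := hcol
  have hdiff : ∀ P N : Finset ℕ, Disjoint P N → ∀ A ∈ stableSets n 2 k, ∀ B ∈ stableSets n 2 k,
      (∀ x ∈ A, x.val ∈ P) → (∀ x ∈ B, x.val ∈ N) → col A ≠ col B := by
    intro P N hd A hA B hB hAP hBN hc
    have hAB : Disjoint A B := by
      rw [Finset.disjoint_left]
      intro x hx hx'
      exact Finset.disjoint_left.1 hd (hAP x hx) (hBN x hx')
    have hne : A ≠ B := by
      rintro rfl
      have h1 := (mem_stableSets.1 hA).1
      rw [disjoint_self] at hAB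
      have : A = ∅ := hAB
      rw [this] at h1
      simp at h1
      omega
    refine hE {A, B} ?_ (Finset.card_pair hne) ?_ ⟨col A, ?_⟩
    · intro x hx
      simp only [mem_insert, mem_singleton] at hx
      rcases hx with rfl | rfl <;> assumption
    · rw [Finset.coe_pair, Set.pairwise_pair]
      exact fun _ => ⟨hAB, hAB.symm⟩
    · intro x hx
      simp only [mem_insert, mem_singleton] at hx
      rcases hx with rfl | rfl
      · rfl
      · exact hc.symm
  have hbig : ∀ P N : Finset ℕ, ¬ (altLen P N n < 2 * k ∧ altLen N P n < 2 * k) →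
      (∃ A ∈ stableSets n 2 k, (∀ x ∈ A, x.val ∈ P) ∧ col A = minCol n k col P) ∧
      (∃ A ∈ stableSets n 2 k, (∀ x ∈ A, x.val ∈ N) ∧ col A = minCol n k col N) := by
    intro P N h
    by_cases h1 : altLen P N n < 2 * k
    · have := stable_of_altLen (n := n) (k := k) (P := N) (N := P) (by omega)
      exact ⟨minCol_mem col this.2, minCol_mem col this.1⟩
    · have := stable_of_altLen (n := n) (k := k) (P := P) (N := N) (by omega)
      exact ⟨minCol_mem col this.1, minCol_mem col this.2⟩
  have hbig2 : ∀ P N : Finset ℕ, Disjoint P N →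
      ¬ (altLen P N n < 2 * k ∧ altLen N P n < 2 * k) →
      minCol n k col P ≠ minCol n k col N ∧ 1 ≤ minCol n k col P ∧ 1 ≤ minCol n k col N ∧
        minCol n k col P ≤ t ∧ minCol n k col N ≤ t := by
    intro P N hd h
    obtain ⟨⟨A, hA, hAP, hA'⟩, ⟨B, hB, hBN, hB'⟩⟩ := hbig P N h
    have h1 := hdiff P N hd A hA B hB hAP hBN
    have h2 := Finset.mem_Icc.1 (hr A hA)
    have h3 := Finset.mem_Icc.1 (hr B hB)
    omega
  have hsm : ∀ P N : Finset ℕ, SVValid n P N → altLen P N n ≠ altLen N P n := by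
    rintro P N ⟨hd, hs, ⟨x, hx⟩⟩
    rcases altLen_diff n hd with ⟨_, _, h⟩ | h | h
    · exact absurd hx (h x (Finset.mem_range.1 (hs hx)))
    · omega
    · omega
  refine octTucker (lam := tuckLab n k col) ?_ ?_ ?_ ?_
  · intro P N hv
    have h1 := hsm P N hv
    have h2 := hbig2 P N hv.1
    unfold tuckLab
    split_ifs with h3 h4 h4 <;> omega
  · intro P N hv
    have h1 := hsm P N hv
    have h2 := hbig2 P N hv.1
    obtain ⟨V, hV, _⟩ := stable_of_seq (n := n) (k := k) (fun j => 2 * k - 1 - j) 0 (by omega)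
      (by intros; omega) (by intros; omega) (range n) (by intros; rw [Finset.mem_range]; omega)
    have ht := Finset.mem_Icc.1 (hr V hV)
    rw [abs_le]
    unfold tuckLab
    split_ifs with h3 h4 h4 <;> omega
  · intro P N hv
    have h1 := hsm P N hv
    have h2 := hbig2 P N hv.1
    unfold tuckLab
    split_ifs <;> omega
  · intro P N P' N' hv hv' hP hN
    have h1 := hsm P N hv
    have h2 := hbig2 P N hv.1
    have h1' := hsm P' N' hv'
    have h2' := hbig2 P' N' hv'.1
    have m1 := altLen_mono n hP hN
    have m2 := altLen_mono n hN hP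
    have k1 : ¬ (altLen P N n < 2 * k ∧ altLen N P n < 2 * k) →
        ¬ (altLen P' N' n < 2 * k ∧ altLen N' P' n < 2 * k) →
        minCol n k col P ≠ minCol n k col N' ∧ minCol n k col N ≠ minCol n k col P' := by
      intro a b
      obtain ⟨⟨A, hA, hAP, hA'⟩, ⟨B, hB, hBN, hB'⟩⟩ := hbig P N a
      obtain ⟨⟨C, hC, hCP, hC'⟩, ⟨D, hD, hDN, hD'⟩⟩ := hbig P' N' b
      have := hdiff P' N' hv'.1 A hA D hD (fun x hx => hP (hAP x hx)) hDN
      have := hdiff P' N' hv'.1 C hC B hB hCP (fun x hx => hN (hBN x hx))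
      omega
    unfold tuckLab
    split_ifs <;> omega

lemma schrijver_upper {n k : ℕ} (hk : 1 ≤ k) (hn : 2 * k ≤ n) :
    ∃ col, IsKneserColoring n 2 (n - 2 * k + 2) (stableSets n 2 k) col := by
  let mn : Finset (Fin n) → ℕ := fun A => sInf {x | ∃ a ∈ A, a.val = x}
  have hmn : ∀ A ∈ stableSets n 2 k, ∃ a ∈ A, a.val = mn A := by
    intro A hA
    have h1 := (mem_stableSets.1 hA).1
    obtain ⟨a, ha⟩ := Finset.card_pos.1 (by omega : 0 < A.card)
    exact Nat.sInf_mem (s := {x | ∃ a ∈ A, a.val = x}) ⟨a.val, a, ha, rfl⟩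
  have hle : ∀ (A : Finset (Fin n)), ∀ a ∈ A, mn A ≤ a.val := fun A a ha =>
    Nat.sInf_le ⟨a, ha, rfl⟩
  refine ⟨fun A => min (mn A + 1) (n - 2 * k + 2), ?_, ?_⟩
  · intro A _
    simp only [Finset.mem_Icc]
    omega
  · rintro E hEF hE2 hE ⟨c, hc⟩
    obtain ⟨A, B, hAB, rfl⟩ := Finset.card_eq_two.1 hE2
    have hA : A ∈ stableSets n 2 k := hEF (by simp)
    have hB : B ∈ stableSets n 2 k := hEF (by simp)
    have hd : Disjoint A B := hE (by simp) (by simp) hAB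
    have cA := hc A (by simp)
    have cB := hc B (by simp)
    simp only at cA cB
    obtain ⟨a, ha, ha'⟩ := hmn A hA
    obtain ⟨b, hb, hb'⟩ := hmn B hB
    by_cases hab : mn A = mn B
    · have : a = b := Fin.ext (by omega)
      subst this
      exact Finset.disjoint_left.1 hd ha hb
    · have hA1 : n - 2 * k + 1 ≤ mn A := by omega
      have hB1 : n - 2 * k + 1 ≤ mn B := by omega
      have hcard : (A ∪ B).card = 2 * k := by
        rw [Finset.card_union_of_disjoint hd, (mem_stableSets.1 hA).1, (mem_stableSets.1 hB).1]
        omega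
      have : (A ∪ B).card ≤ (Finset.Ico (n - 2 * k + 1) n).card := by
        apply Finset.card_le_card_of_injOn Fin.val
        · intro x hx
          simp only [Finset.coe_Ico, Set.mem_Ico]
          refine ⟨?_, x.2⟩
          rcases Finset.mem_union.1 hx with h | h
          · exact hA1.trans (hle A x h)
          · exact hB1.trans (hle B x h)
        · exact Fin.val_injective.injOn
      rw [hcard, Nat.card_Ico] at this
      omega

/-- Schrijver's theorem: the chromatic number of the Schrijver graph equals `n - 2k + 2`. -/
theorem stmt7 (n k : ℕ) (hk : 1 ≤ k) (hn : 2 * k ≤ n) :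
    kneserChrom n 2 (stableSets n 2 k) = n - 2 * k + 2 := by
  apply le_antisymm
  · exact Nat.sInf_le (schrijver_upper hk hn)
  · unfold kneserChrom
    refine le_csInf ⟨_, schrijver_upper hk hn⟩ ?_
    rintro t ⟨c, hc⟩
    have := schrijver_lower hk hn hc
    omega
end

section
/- Let t, k, m be positive integers with k ≤ m and t ≥ 2. Then the chromatic number of the fractional multiple K^{k,m}_t of the complete graph K_t equals t(m − k + 1). -/
open Finset

open Classical in
/-- The vertex set of the fractional multiple `K^{k,m}_t` of the complete graph `K_t`:
the ground set `[mt]` is split into `m` consecutive blocks of size `t` (the copies of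
`K_t`), and the vertices are the `k`-subsets meeting each block in at most one element.
Two such vertices are adjacent in `K^{k,m}_t` iff they are disjoint, i.e.
`K^{k,m}_t = KG^2` of this vertex set. -/
noncomputable def fracMultipleVerts (t k m : ℕ) : Finset (Finset (Fin (m * t))) :=
  Finset.univ.filter fun A => A.card = k ∧
    ∀ i : Fin m, (A.filter fun a => (a : ℕ) / t = (i : ℕ)).card ≤ 1

namespace Tuck

abbrev Z2 := ZMod 2

/-- mod 2 coboundary on functions of lists -/
def cob {V : Type} : (List V → Z2) → List V → Z2
  | _, [] => 0
  | f, (x :: l) => f l + cob (fun m => f (x :: m)) l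

lemma z2_self (a : Z2) : a + a = 0 := CharTwo.add_self_eq_zero a

lemma cob_add {V : Type} (l : List V) : ∀ f g : List V → Z2,
    cob (fun m => f m + g m) l = cob f l + cob g l := by
  induction l with
  | nil => intro f g; simp [cob]
  | cons x l ih => intro f g; simp only [cob]; rw [ih]; ring

lemma cob_zero {V : Type} (l : List V) : cob (fun _ => (0 : Z2)) l = 0 := by
  induction l with
  | nil => simp [cob]
  | cons x l ih => simp only [cob]; rw [ih]; ring

lemma cob_map {V W : Type} (u : V → W) (l : List V) : ∀ f : List W → Z2,
    cob f (l.map u) = cob (fun m => f (m.map u)) l := by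
  induction l with
  | nil => intro f; simp [cob]
  | cons x l ih => intro f; simp only [cob, List.map_cons]; rw [ih]

/-! ### sorting -/

def ins (a : ℤ) : (List ℤ → Z2) → List ℤ → Z2
  | f, [] => f [a]
  | f, (b :: m) => if |a| < |b| then f (a :: b :: m) else if |a| = |b| then 0
      else ins a (fun r => f (b :: r)) m

def Srtd (m : List ℤ) : Prop := m.Pairwise (fun a b => |a| < |b|)

lemma ins_add (a : ℤ) (m : List ℤ) : ∀ f g : List ℤ → Z2,
    ins a (fun r => f r + g r) m = ins a f m + ins a g m := by
  induction m with
  | nil => intro f g; simp [ins]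
  | cons b m ih =>
    intro f g; simp only [ins]
    split_ifs
    · rfl
    · simp
    · rw [ih]

lemma ins_lt (a : ℤ) (m : List ℤ) (h : ∀ b ∈ m, |a| < |b|) (f : List ℤ → Z2) :
    ins a f m = f (a :: m) := by
  cases m with
  | nil => rfl
  | cons b m => simp [ins, h b (by simp)]

lemma ins_cob (a : ℤ) (m : List ℤ) (hm : Srtd m) (hc : ∀ b ∈ m, a ≠ -b) :
    ∀ f : List ℤ → Z2, ins a (cob f) m = f m + cob (ins a f) m := by
  induction m with
  | nil => intro f; simp [ins, cob]
  | cons b m ih =>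
    intro f
    have hm' := List.pairwise_cons.1 hm
    have ih' := ih hm'.2 (fun c hc' => hc c (by simp [hc']))
    rcases lt_trichotomy |a| |b| with h | h | h
    · have h2 : ∀ c ∈ m, |a| < |c| := fun c hc' => h.trans (hm'.1 c hc')
      have e : (fun r => ins a f (b :: r)) = fun r => f (a :: b :: r) := by
        funext r; simp [ins, h]
      have e1 : ins a (cob f) (b :: m) = cob f (a :: b :: m) := by simp [ins, h]
      rw [e1]
      simp only [cob]
      rw [e, ins_lt a m h2]
    · have hab : a = b := by
        rcases abs_eq_abs.1 h with h | h
        · exact h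
        · exact absurd h (hc b (by simp))
      subst hab
      have e : (fun r => ins a f (a :: r)) = fun r => 0 := by
        funext r; simp [ins]
      have e1 : ins a (cob f) (a :: m) = 0 := by simp [ins]
      rw [e1]
      simp only [cob]
      rw [e, ins_lt a m hm'.1, cob_zero, add_zero, z2_self]
    · have n1 : ¬ |a| < |b| := by omega
      have n2 : ¬ |a| = |b| := by omega
      have e : (fun r => ins a f (b :: r)) = ins a (fun r => f (b :: r)) := by
        funext r; simp [ins, n1, n2]
      have e1 : ins a (cob f) (b :: m) = ins a (fun r => f r + cob (fun q => f (b :: q)) r) m := by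
        simp [ins, n1, n2, cob]
      rw [e1, ins_add, ih']
      simp only [cob]
      rw [e]; ring

lemma ins_congr (a : ℤ) (m : List ℤ) (hm : Srtd m) : ∀ f g : List ℤ → Z2,
    (∀ r, Srtd r → (∀ x ∈ r, x = a ∨ x ∈ m) → r.length = m.length + 1 → f r = g r) →
    ins a f m = ins a g m := by
  induction m with
  | nil => intro f g h; simp only [ins]; exact h _ (by simp [Srtd]) (by simp) (by simp)
  | cons b m ih =>
    intro f g h
    have hm' := List.pairwise_cons.1 hm
    simp only [ins]
    split_ifs with h1 h2
    · apply h
      · refine List.pairwise_cons.2 ⟨?_, hm⟩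
        intro c hc
        rcases List.mem_cons.1 hc with rfl | hc
        · exact h1
        · exact h1.trans (hm'.1 c hc)
      · intro x hx; simpa using hx
      · simp
    · rfl
    · apply ih hm'.2
      intro r hr hx hl
      apply h
      · refine List.pairwise_cons.2 ⟨?_, hr⟩
        intro c hc
        rcases hx c hc with rfl | hc
        · omega
        · exact hm'.1 c hc
      · intro x hx'
        rcases List.mem_cons.1 hx' with rfl | hx'
        · simp
        · rcases hx x hx' with h | h
          · exact Or.inl h
          · exact Or.inr (by simp [h])
      · simp [hl]

lemma ins_neg (a : ℤ) (m : List ℤ) : ∀ f : List ℤ → Z2,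
    ins (-a) f (m.map Neg.neg) = ins a (fun r => f (r.map Neg.neg)) m := by
  induction m with
  | nil => intro f; simp [ins]
  | cons b m ih =>
    intro f
    simp only [ins, List.map_cons, abs_neg]
    rw [ih]

def srt : (List ℤ → Z2) → List ℤ → Z2
  | f, [] => f []
  | f, (a :: l) => srt (ins a f) l

lemma srt_congr (l : List ℤ) : ∀ f g : List ℤ → Z2,
    (∀ r, Srtd r → (∀ x ∈ r, x ∈ l) → r.length = l.length → f r = g r) →
    srt f l = srt g l := by
  induction l with
  | nil => intro f g h; exact h [] (by simp [Srtd]) (by simp) rfl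
  | cons a l ih =>
    intro f g h
    simp only [srt]
    apply ih
    intro r hr hx hl
    apply ins_congr a r hr
    intro q hq hy hlq
    apply h q hq
    · intro y hy'
      rcases hy y hy' with h | h
      · simp [h]
      · simp [hx y h]
    · simp [hlq, hl]

lemma srt_add (l : List ℤ) : ∀ f g : List ℤ → Z2,
    srt (fun r => f r + g r) l = srt f l + srt g l := by
  induction l with
  | nil => intro f g; simp [srt]
  | cons a l ih =>
    intro f g; simp only [srt]
    rw [← ih]
    congr 1
    funext r; exact ins_add a r f g

lemma srt_zero (l : List ℤ) : srt (fun _ => 0) l = 0 := by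
  have := srt_add l (fun _ => 0) (fun _ => 0)
  simpa using this

lemma srt_cob (l : List ℤ) (hc : l.Pairwise (fun a b => a ≠ -b)) : ∀ f : List ℤ → Z2,
    srt (cob f) l = cob (srt f) l := by
  induction l with
  | nil => intro f; simp [srt, cob]
  | cons a l ih =>
    intro f
    have hc' := List.pairwise_cons.1 hc
    have e : srt (cob f) (a :: l) = srt (fun r => f r + cob (ins a f) r) l := by
      simp only [srt]
      apply srt_congr
      intro r hr hx hl
      exact ins_cob a r hr (fun b hb => hc'.1 b (hx b hb)) f
    rw [e, srt_add, ih hc'.2]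
    simp only [cob, srt]

lemma srt_neg (l : List ℤ) : ∀ f : List ℤ → Z2,
    srt f (l.map Neg.neg) = srt (fun r => f (r.map Neg.neg)) l := by
  induction l with
  | nil => intro f; simp [srt]
  | cons a l ih =>
    intro f
    simp only [srt, List.map_cons]
    rw [ih]
    congr 1
    funext r; exact ins_neg a r f

/-- alternating sign pattern; `true` means that it starts with a positive number -/
def alt : Bool → List ℤ → Z2
  | _, [] => 1
  | s, (a :: m) => if decide (0 < a) = s then alt (!s) m else 0

lemma alt_cob (m : List ℤ) (hm : m ≠ []) : ∀ s : Bool,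
    cob (alt s) m = alt s m + alt (!s) m := by
  induction m with
  | nil => exact absurd rfl hm
  | cons a m ih =>
    intro s
    by_cases hm0 : m = []
    · subst hm0
      by_cases h : (0 < a) <;> cases s <;> simp [cob, alt, h]
    · have ih := ih hm0
      simp only [cob]
      by_cases h : decide (0 < a) = s
      · have e : (fun r => alt s (a :: r)) = alt (!s) := by
          funext r; simp [alt, h]
        have h' : ¬ decide (0 < a) = !s := by rw [h]; cases s <;> simp
        rw [e, ih (!s)]
        simp only [alt, if_pos h, if_neg h', Bool.not_not]
        have := z2_self (alt s m)
        linear_combination this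
      · have e : (fun r => alt s (a :: r)) = fun _ => 0 := by
          funext r; simp [alt, h]
        have h' : decide (0 < a) = !s := by
          cases s <;> simp_all
        rw [e, cob_zero]
        simp only [alt, if_neg h, if_pos h', Bool.not_not]
        ring

lemma alt_neg (m : List ℤ) (h0 : ∀ a ∈ m, a ≠ 0) : ∀ s : Bool,
    alt s (m.map Neg.neg) = alt (!s) m := by
  induction m with
  | nil => intro s; simp [alt]
  | cons a m ih =>
    intro s
    have ha : a ≠ 0 := h0 a (by simp)
    simp only [alt, List.map_cons]
    rw [ih (fun a ha => h0 a (by simp [ha]))]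
    rcases lt_or_gt_of_ne ha with h | h
    · have : ¬ 0 < a := by omega
      cases s <;> simp [h, this]
    · have : ¬ a < 0 := by omega
      cases s <;> simp [h, this]

/-! ### the chains -/

abbrev V := ℕ → SignType

def up (d : ℕ) (x : V) : V := Function.update x d 1

def le (x y : V) : Prop := ∀ a, x a ≠ 0 → y a = x a

def prism (d : ℕ) : List V → List (List V)
  | [] => []
  | (x :: l) => (x :: up d x :: l.map (up d)) :: (prism d l).map (fun m => x :: m)

def dst (d : ℕ) (f : List V → Z2) (l : List V) : Z2 := ((prism d l).map f).sum

lemma dst_cons (d : ℕ) (f : List V → Z2) (x : V) (l : List V) :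
    dst d f (x :: l) = f (x :: up d x :: l.map (up d)) + dst d (fun m => f (x :: m)) l := by
  simp [dst, prism, Function.comp_def]

lemma dst_add (d : ℕ) (f g : List V → Z2) (l : List V) :
    dst d (fun m => f m + g m) l = dst d f l + dst d g l := by
  simp [dst, List.sum_map_add]

lemma dst_cob (d : ℕ) (l : List V) : ∀ f : List V → Z2,
    dst d (cob f) l = f l + f (l.map (up d)) + cob (dst d f) l := by
  induction l with
  | nil => intro f; simp [dst, prism, cob, z2_self]
  | cons x l ih =>
    intro f
    have e1 : (fun m => cob f (x :: m)) = fun m => f m + cob (fun r => f (x :: r)) m := by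
      funext m; rfl
    have e2 : (fun m => dst d f (x :: m)) = fun m =>
        f (x :: up d x :: m.map (up d)) + dst d (fun r => f (x :: r)) m := by
      funext m; exact dst_cons d f x m
    rw [dst_cons, e1, dst_add, ih]
    simp only [cob]
    rw [e2, cob_add, cob_map]
    simp only [List.map_cons]
    have := z2_self (f (x :: l.map (up d)))
    linear_combination this

def e (d : ℕ) : V := Function.update 0 d 1

/-- pairing with the hemisphere of dimension `d`, in terms of the sphere of dimension `d - 1` -/
def gam (d : ℕ) (Φ : (List V → Z2) → Z2) (f : List V → Z2) : Z2 :=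
  Φ (fun l => f (e d :: l.map (up d)) + dst d f l)

def phi : ℕ → (List V → Z2) → Z2
  | 0, f => f []
  | (d + 1), f => gam d (phi d) f + gam d (phi d) (fun l => f (l.map Neg.neg))

lemma phi_add (d : ℕ) : ∀ f g : List V → Z2, phi d (fun l => f l + g l) = phi d f + phi d g := by
  induction d with
  | zero => intro f g; rfl
  | succ d ih =>
    have hg : ∀ f g : List V → Z2, gam d (phi d) (fun l => f l + g l)
        = gam d (phi d) f + gam d (phi d) g := by
      intro f g
      simp only [gam]
      rw [← ih]
      congr 1
      funext l
      rw [dst_add]; ring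
    intro f g
    simp only [phi]
    rw [hg, hg]; ring

lemma gam_add (d : ℕ) (f g : List V → Z2) : gam d (phi d) (fun l => f l + g l)
        = gam d (phi d) f + gam d (phi d) g := by
  simp only [gam]
  rw [← phi_add]
  congr 1
  funext l
  rw [dst_add]; ring

lemma phi_neg (d : ℕ) (f : List V → Z2) : phi d (fun l => f (l.map Neg.neg)) = phi d f := by
  cases d with
  | zero => rfl
  | succ d =>
    simp only [phi]
    have : (fun l : List V => f ((l.map Neg.neg).map Neg.neg)) = f := by
      funext l; simp
    rw [this, add_comm]

lemma phi_cob (d : ℕ) : (∀ f, phi d (cob f) = 0) ∧ ∀ f, gam d (phi d) (cob f) = phi d f := by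
  have key : ∀ d, (∀ f, phi d (cob f) = 0) → ∀ f, gam d (phi d) (cob f) = phi d f := by
    intro d h f
    simp only [gam]
    have : (fun l => cob f (e d :: l.map (up d)) + dst d (cob f) l) = fun l => f l +
        cob (fun m => f (e d :: m.map (up d)) + dst d f m) l := by
      funext l
      rw [cob_add, dst_cob]
      simp only [cob]
      rw [cob_map]
      have := z2_self (f (l.map (up d)))
      linear_combination this
    rw [this, phi_add, h, add_zero]
  induction d with
  | zero => exact ⟨fun f => rfl, key 0 (fun f => rfl)⟩
  | succ d ih =>
    have : ∀ f, phi (d + 1) (cob f) = 0 := by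
      intro f
      simp only [phi]
      have e1 : (fun l : List V => cob f (l.map Neg.neg)) = cob (fun l => f (l.map Neg.neg)) := by
        funext l; exact cob_map _ _ _
      rw [e1, ih.2, ih.2, phi_neg, z2_self]
    exact ⟨this, key _ this⟩

def Good (d : ℕ) (l : List V) : Prop :=
  l.Pairwise le ∧ (∀ x ∈ l, x ≠ 0 ∧ ∀ a, d ≤ a → x a = 0) ∧ l.length = d

lemma le_up {d : ℕ} {x : V} (h : x d = 0) : le x (up d x) := by
  intro a ha
  by_cases had : a = d
  · subst had; exact absurd h ha
  · simp [up, had]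

lemma up_mono {d : ℕ} {x y : V} (h : le x y) : le (up d x) (up d y) := by
  intro a ha
  by_cases had : a = d
  · subst had; simp [up]
  · simp only [up, Function.update_of_ne had] at ha ⊢
    exact h a ha

lemma le_trans' {x y z : V} (h : le x y) (h' : le y z) : le x z := by
  intro a ha
  have := h a ha
  rw [← this]
  exact h' a (by rw [this]; exact ha)

lemma prism_mem (d : ℕ) (l : List V) (hp : l.Pairwise le) (h0 : ∀ x ∈ l, x d = 0) :
    ∀ m ∈ prism d l, m.Pairwise le ∧ (∀ y ∈ m, ∃ x ∈ l, y = x ∨ y = up d x) ∧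
      m.length = l.length + 1 := by
  induction l with
  | nil => intro m hm; simp [prism] at hm
  | cons x l ih =>
    intro m hm
    have hp' := List.pairwise_cons.1 hp
    have hx0 := h0 x (by simp)
    have ih := ih hp'.2 (fun y hy => h0 y (by simp [hy]))
    simp only [prism, List.mem_cons, List.mem_map] at hm
    rcases hm with rfl | ⟨r, hr, rfl⟩
    · refine ⟨?_, ?_, by simp⟩
      · refine List.pairwise_cons.2 ⟨?_, List.pairwise_cons.2 ⟨?_, ?_⟩⟩
        · intro y hy
          rcases List.mem_cons.1 hy with rfl | hy
          · exact le_up hx0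
          · obtain ⟨z, hz, rfl⟩ := List.mem_map.1 hy
            exact le_trans' (le_up hx0) (up_mono (hp'.1 z hz))
        · intro y hy
          obtain ⟨z, hz, rfl⟩ := List.mem_map.1 hy
          exact up_mono (hp'.1 z hz)
        · rw [List.pairwise_map]
          exact hp'.2.imp (fun h => up_mono h)
      · intro y hy
        simp only [List.mem_cons, List.mem_map] at hy
        rcases hy with rfl | rfl | ⟨z, hz, rfl⟩
        · exact ⟨y, by simp, Or.inl rfl⟩
        · exact ⟨x, by simp, Or.inr rfl⟩
        · exact ⟨z, by simp [hz], Or.inr rfl⟩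
    · obtain ⟨i1, i2, i3⟩ := ih r hr
      refine ⟨List.pairwise_cons.2 ⟨?_, i1⟩, ?_, by simp [i3]⟩
      · intro y hy
        obtain ⟨z, hz, rfl | rfl⟩ := i2 y hy
        · exact hp'.1 y hz
        · exact le_trans' (hp'.1 z hz) (le_up (h0 z (by simp [hz])))
      · intro y hy
        rcases List.mem_cons.1 hy with rfl | hy
        · exact ⟨y, by simp, Or.inl rfl⟩
        · obtain ⟨z, hz, h⟩ := i2 y hy
          exact ⟨z, by simp [hz], h⟩

lemma up_good {d : ℕ} {x : V} (h : ∀ a, d ≤ a → x a = 0) :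
    up d x ≠ 0 ∧ ∀ a, d + 1 ≤ a → up d x a = 0 := by
  constructor
  · intro h
    have := congrFun h d
    simp [up] at this
  · intro a ha
    have : a ≠ d := by omega
    simp only [up, Function.update_of_ne this]
    exact h a (by omega)

lemma gam_congr' (d : ℕ)
    (hd : ∀ f g : List V → Z2, (∀ l, Good d l → f l = g l) → phi d f = phi d g)
    (f g : List V → Z2) (h : ∀ l, Good (d + 1) l → f l = g l) :
    gam d (phi d) f = gam d (phi d) g := by
  simp only [gam]
  apply hd
  intro l ⟨h1, h2, h3⟩
  congr 1
  · apply h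
    refine ⟨List.pairwise_cons.2 ⟨?_, ?_⟩, ?_, by simp [h3]⟩
    · intro y hy
      obtain ⟨z, hz, rfl⟩ := List.mem_map.1 hy
      intro a ha
      by_cases had : a = d
      · subst had; simp [up, e]
      · simp [e, had] at ha
    · rw [List.pairwise_map]
      exact h1.imp (fun h => up_mono h)
    · intro y hy
      rcases List.mem_cons.1 hy with rfl | hy
      · exact up_good (x := 0) (by simp)
      · obtain ⟨z, hz, rfl⟩ := List.mem_map.1 hy
        exact up_good (h2 z hz).2
  · simp only [dst]
    congr 1
    apply List.map_congr_left
    intro m hm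
    obtain ⟨i1, i2, i3⟩ := prism_mem d l h1 (fun x hx => (h2 x hx).2 d le_rfl) m hm
    apply h
    refine ⟨i1, ?_, by rw [i3, h3]⟩
    intro y hy
    obtain ⟨z, hz, rfl | rfl⟩ := i2 y hy
    · exact ⟨(h2 y hz).1, fun a ha => (h2 y hz).2 a (by omega)⟩
    · exact up_good (h2 z hz).2

lemma neg_ne {x : V} (h : x ≠ 0) : -x ≠ 0 := by
  intro h'
  apply h
  funext a
  have := congrFun h' a
  simp only [Pi.neg_apply, Pi.zero_apply] at this ⊢
  revert this
  generalize x a = s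
  revert s
  decide

lemma good_neg {d : ℕ} {l : List V} (h : Good d l) : Good d (l.map Neg.neg) := by
  obtain ⟨h1, h2, h3⟩ := h
  refine ⟨?_, ?_, by simp [h3]⟩
  · rw [List.pairwise_map]
    refine h1.imp ?_
    intro x y hxy a ha
    have : x a ≠ 0 := by intro h; apply ha; simp [h]
    simp [hxy a this]
  · intro y hy
    obtain ⟨z, hz, rfl⟩ := List.mem_map.1 hy
    refine ⟨neg_ne (h2 z hz).1, fun a ha => by simp [(h2 z hz).2 a ha]⟩

lemma phi_congr (d : ℕ) : ∀ f g : List V → Z2, (∀ l, Good d l → f l = g l) →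
    phi d f = phi d g := by
  induction d with
  | zero => intro f g h; exact h [] (by simp [Good])
  | succ d ih =>
    intro f g h
    simp only [phi]
    rw [gam_congr' d ih f g h, gam_congr' d ih _ _ (fun l hl => h _ (good_neg hl))]

/-- Octahedral Tucker lemma. -/
theorem tucker (n N : ℕ) (lam : V → ℤ)
    (hneg : ∀ x : V, x ≠ 0 → (∀ a, n ≤ a → x a = 0) → lam (-x) = - lam x)
    (hne : ∀ x : V, x ≠ 0 → (∀ a, n ≤ a → x a = 0) → lam x ≠ 0)
    (hN : ∀ x : V, x ≠ 0 → (∀ a, n ≤ a → x a = 0) → |lam x| ≤ N)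
    (hc : ∀ x y : V, x ≠ 0 → (∀ a, n ≤ a → x a = 0) → (∀ a, n ≤ a → y a = 0) → le x y →
      lam x ≠ - lam y) : n ≤ N := by
  by_contra hlt
  push Not at hlt
  have main : ∀ d, d ≤ n → phi d (fun l => srt (alt true) (l.map lam)) = 1 := by
    intro d
    induction d with
    | zero => intro _; simp [phi, srt, alt]
    | succ d ih =>
      intro hd
      rw [← ih (by omega), ← (phi_cob d).2]
      simp only [phi]
      rw [← gam_add]
      apply gam_congr' d (phi_congr d)
      intro l ⟨h1, h2, h3⟩
      have h2' : ∀ x ∈ l, x ≠ 0 ∧ ∀ a, n ≤ a → x a = 0 :=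
        fun x hx => ⟨(h2 x hx).1, fun a ha => (h2 x hx).2 a (by omega)⟩
      have e1 : (l.map Neg.neg).map lam = (l.map lam).map Neg.neg := by
        simp only [List.map_map]
        apply List.map_congr_left
        intro x hx
        exact hneg x (h2' x hx).1 (h2' x hx).2
      have hpw : (l.map lam).Pairwise (fun a b => a ≠ -b) := by
        rw [List.pairwise_map]
        refine List.Pairwise.imp_of_mem ?_ h1
        intro x y hx hy hxy
        exact hc x y (h2' x hx).1 (h2' x hx).2 (h2' y hy).2 hxy
      rw [e1, ← cob_map, ← srt_cob _ hpw, srt_neg, ← srt_add]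
      apply srt_congr
      intro r hr hx hl
      have hr0 : ∀ a ∈ r, a ≠ 0 := by
        intro a ha
        obtain ⟨x, hx', rfl⟩ := List.mem_map.1 (hx a ha)
        exact hne x (h2' x hx').1 (h2' x hx').2
      rw [alt_neg r hr0, alt_cob]
      intro h
      subst h
      simp [h3] at hl
  have h1 := main n le_rfl
  have h0 : phi n (fun l => srt (alt true) (l.map lam)) = phi n (fun _ => 0) := by
    apply phi_congr
    intro l ⟨g1, g2, g3⟩
    rw [← srt_zero (l.map lam)]
    apply srt_congr
    intro r hr hx hl
    exfalso
    have hnd : (r.map Int.natAbs).Nodup := by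
      unfold List.Nodup
      rw [List.pairwise_map]
      refine List.Pairwise.imp ?_ hr
      intro a b hab
      simp only [Int.abs_eq_natAbs] at hab
      omega
    have hsub : (r.map Int.natAbs).toFinset ⊆ Finset.Icc 1 N := by
      intro a ha
      simp only [List.mem_toFinset, List.mem_map] at ha
      obtain ⟨b, hb, rfl⟩ := ha
      obtain ⟨x, hx', rfl⟩ := List.mem_map.1 (hx b hb)
      have a1 := hne x (g2 x hx').1 (g2 x hx').2
      have a2 := hN x (g2 x hx').1 (g2 x hx').2
      rw [Finset.mem_Icc]
      simp only [Int.abs_eq_natAbs] at a2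
      omega
    have := Finset.card_le_card hsub
    rw [List.toFinset_card_of_nodup hnd] at this
    simp [hl, g3] at this
    omega
  have h2 : phi n (fun _ => 0) = 0 := by
    have := phi_add n (fun _ => 0) (fun _ => 0)
    simpa using this
  rw [h0, h2] at h1
  exact absurd h1 (by decide)

end Tuck

namespace Tuck

/-- (number of sign runs, last nonzero sign) among the first `n` coordinates -/
def run (x : V) : ℕ → ℕ × SignType
  | 0 => (0, 0)
  | (n + 1) => if x n = 0 ∨ x n = (run x n).2 then run x n else ((run x n).1 + 1, x n)

lemma run_neg (x : V) (n : ℕ) : run (-x) n = ((run x n).1, -(run x n).2) := by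
  induction n with
  | zero => simp [run]
  | succ n ih =>
    simp only [run, ih, Pi.neg_apply]
    have h : ∀ s r : SignType, (-s = 0 ∨ -s = -r) ↔ (s = 0 ∨ s = r) := by decide
    simp only [h]
    split_ifs <;> rfl

lemma run_mono {x y : V} (h : le x y) (n : ℕ) :
    (run x n).1 < (run y n).1 ∨ ((run x n).1 = (run y n).1 ∧ (run x n).2 = (run y n).2) := by
  induction n with
  | zero => simp [run]
  | succ n ih =>
    simp only [run]
    by_cases hx : x n = 0
    · simp only [hx, true_or, if_true]
      split_ifs
      · exact ih
      · left; simp only; omega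
    · have hy : y n = x n := h n hx
      rw [hy]
      simp only [hx, false_or]
      split_ifs with h1 h2 h2
      · exact ih
      · rcases ih with ih | ⟨i1, i2⟩
        · left; simp only; omega
        · exact absurd (h1.trans i2) h2
      · rcases ih with ih | ⟨i1, i2⟩
        · simp only
          rcases Nat.lt_or_ge ((run x n).1 + 1) (run y n).1 with h | h
          · exact Or.inl h
          · right; exact ⟨by omega, h2⟩
        · exact absurd (h2.trans i2.symm) h1
      · simp only
        rcases ih with ih | ⟨i1, i2⟩
        · left; omega
        · right; exact ⟨by omega, trivial⟩

lemma run_pos (x : V) (n : ℕ) : (run x n).2 = 0 → (∀ a, a < n → x a = 0) ∧ (run x n).1 = 0 := by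
  induction n with
  | zero => simp [run]
  | succ n ih =>
    simp only [run]
    split_ifs with h
    · intro h0
      refine ⟨fun a ha => ?_, (ih h0).2⟩
      rcases Nat.lt_succ_iff_lt_or_eq.1 ha with ha | rfl
      · exact (ih h0).1 a ha
      · rcases h with h | h
        · exact h
        · exact h.trans h0
    · intro h0; exact absurd (Or.inl h0) h

lemma run_pos' (x : V) (n : ℕ) : (run x n).1 = 0 → (run x n).2 = 0 := by
  induction n with
  | zero => simp [run]
  | succ n ih =>
    simp only [run]
    split_ifs with h
    · exact ih
    · intro h0; simp at h0

lemma run_add (x : V) (a j : ℕ) : (run x (a + j)).1 ≤ (run x a).1 + j := by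
  induction j with
  | zero => simp
  | succ j ih =>
    rw [← Nat.add_assoc]
    simp only [run]
    split_ifs
    · omega
    · simp only; omega

lemma run_add_one (x : V) (s : SignType) (a j : ℕ) (h : ∀ i, i < j → x (a + i) = 0 ∨ x (a + i) = s) :
    (run x (a + j)).1 ≤ (run x a).1 ∨
      ((run x (a + j)).1 ≤ (run x a).1 + 1 ∧ (run x (a + j)).2 = s) := by
  induction j with
  | zero => simp
  | succ j ih =>
    have ih := ih (fun i hi => h i (by omega))
    have hj := h j (by omega)
    rw [← Nat.add_assoc]
    simp only [run]
    split_ifs with h1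
    · exact ih
    · have hj : x (a + j) = s := by
        rcases hj with hj | hj
        · exact absurd (Or.inl hj) h1
        · exact hj
      right
      refine ⟨?_, hj⟩
      rcases ih with ih | ⟨i1, i2⟩
      · simp only; omega
      · exact absurd (Or.inr (hj.trans i2.symm)) h1

lemma run_add_zero (x : V) (a j : ℕ) (h : ∀ i, i < j → x (a + i) = 0) :
    run x (a + j) = run x a := by
  induction j with
  | zero => simp
  | succ j ih =>
    have ih := ih (fun i hi => h i (by omega))
    rw [← Nat.add_assoc]
    simp only [run]
    rw [if_pos (Or.inl (h j (by omega))), ih]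

open Classical in
/-- the blocks among the first `m` that contain sign `s` -/
noncomputable def blk (t : ℕ) (x : V) (s : SignType) (m : ℕ) : Finset ℕ :=
  (Finset.range m).filter (fun b => ∃ i, i < t ∧ x (b * t + i) = s)

open Classical in
lemma blk_succ (t : ℕ) (x : V) (s : SignType) (m : ℕ) :
    (blk t x s (m + 1)).card = (blk t x s m).card +
      if (∃ i, i < t ∧ x (m * t + i) = s) then 1 else 0 := by
  unfold blk
  rw [Finset.range_add_one, Finset.filter_insert]
  split_ifs with h
  · rw [Finset.card_insert_of_notMem (by simp)]
  · rfl

lemma run_blk (t : ℕ) (ht : 2 ≤ t) (x : V) (m : ℕ) :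
    2 * (run x (m * t)).1 ≤ t * ((blk t x 1 m).card + (blk t x (-1) m).card) := by
  classical
  induction m with
  | zero => simp [run]
  | succ m ih =>
    rw [blk_succ, blk_succ]
    have tri : ∀ s : SignType, s = 0 ∨ s = 1 ∨ s = -1 := by decide
    have e : (m + 1) * t = m * t + t := by ring
    rw [e]
    by_cases h1 : ∃ i, i < t ∧ x (m * t + i) = 1 <;>
      by_cases h2 : ∃ i, i < t ∧ x (m * t + i) = -1
    · rw [if_pos h1, if_pos h2]
      have := run_add x (m * t) t
      nlinarith
    · rw [if_pos h1, if_neg h2]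
      have := run_add_one x 1 (m * t) t (fun i hi => by
        rcases tri (x (m * t + i)) with h | h | h
        · exact Or.inl h
        · exact Or.inr h
        · exact absurd ⟨i, hi, h⟩ h2)
      have : (run x (m * t + t)).1 ≤ (run x (m * t)).1 + 1 := by
        rcases this with h | h <;> omega
      nlinarith
    · rw [if_neg h1, if_pos h2]
      have := run_add_one x (-1) (m * t) t (fun i hi => by
        rcases tri (x (m * t + i)) with h | h | h
        · exact Or.inl h
        · exact absurd ⟨i, hi, h⟩ h1
        · exact Or.inr h)
      have : (run x (m * t + t)).1 ≤ (run x (m * t)).1 + 1 := by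
        rcases this with h | h <;> omega
      nlinarith
    · rw [if_neg h1, if_neg h2, run_add_zero x (m * t) t]
      · simpa using ih
      · intro i hi
        rcases tri (x (m * t + i)) with h | h | h
        · exact h
        · exact absurd ⟨i, hi, h⟩ h1
        · exact absurd ⟨i, hi, h⟩ h2

lemma mem_verts (t k m : ℕ) (A : Finset (Fin (m * t))) :
    A ∈ fracMultipleVerts t k m ↔ A.card = k ∧
      ∀ a ∈ A, ∀ b ∈ A, (a : ℕ) / t = (b : ℕ) / t → a = b := by
  classical
  simp only [fracMultipleVerts, Finset.mem_filter, Finset.mem_univ, true_and, Finset.card_le_one]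
  refine and_congr_right fun _ => ⟨fun h a ha b hb hab => ?_, fun h i x hx y hy => ?_⟩
  · have hlt : (a : ℕ) / t < m := by
      have ha2 := a.2
      rcases Nat.eq_zero_or_pos t with h0 | h0
      · simp [h0] at ha2
      · rw [Nat.div_lt_iff_lt_mul h0]; exact ha2
    apply Fin.ext
    apply h ⟨(a : ℕ) / t, hlt⟩
    · simp only [Finset.bind_def, Finset.pure_def, Finset.mem_sup, Finset.mem_singleton]
      exact ⟨⟨a, ha, rfl⟩, trivial⟩
    · simp only [Finset.bind_def, Finset.pure_def, Finset.mem_sup, Finset.mem_singleton]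
      exact ⟨⟨b, hb, rfl⟩, hab.symm⟩
  · simp only [Finset.bind_def, Finset.pure_def, Finset.mem_sup, Finset.mem_singleton] at hx hy
    obtain ⟨⟨a, ha, rfl⟩, h1⟩ := hx
    obtain ⟨⟨b, hb, rfl⟩, h2⟩ := hy
    rw [h a ha b hb (h1.trans h2.symm)]

lemma exists_vert (t k m : ℕ) (x : V) (s : SignType) (h : k ≤ (blk t x s m).card) :
    ∃ A ∈ fracMultipleVerts t k m, ∀ a ∈ A, x (a : ℕ) = s := by
  classical
  obtain ⟨B, hB, hBk⟩ := Finset.exists_subset_card_eq h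
  have hB' : ∀ b : B, (b : ℕ) < m ∧ ∃ i, i < t ∧ x ((b : ℕ) * t + i) = s := by
    intro b
    have := hB b.2
    simpa [blk] using this
  choose hb1 g hg1 hg2 using hB'
  have hlt : ∀ b : B, (b : ℕ) * t + g b < m * t := by
    intro b
    have h1 := hb1 b
    have h2 := hg1 b
    calc (b : ℕ) * t + g b < ((b : ℕ) + 1) * t := by rw [add_mul]; omega
      _ ≤ m * t := Nat.mul_le_mul_right t h1
  have hdiv : ∀ b : B, ((b : ℕ) * t + g b) / t = b := by
    intro b
    have h2 := hg1 b
    rw [mul_comm, Nat.mul_add_div (by omega), Nat.div_eq_of_lt h2, add_zero]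
  let F : B → Fin (m * t) := fun b => ⟨(b : ℕ) * t + g b, hlt b⟩
  have hF : Function.Injective F := by
    intro b b' hbb
    have : (b : ℕ) * t + g b = (b' : ℕ) * t + g b' := congrArg Fin.val hbb
    apply Subtype.ext
    rw [← hdiv b, ← hdiv b', this]
  refine ⟨Finset.univ.image F, ?_, ?_⟩
  · rw [mem_verts]
    refine ⟨by rw [Finset.card_image_of_injective _ hF]; simp [hBk], ?_⟩
    intro a ha a' ha' haa
    simp only [Finset.mem_image, Finset.mem_univ, true_and] at ha ha'
    obtain ⟨b, rfl⟩ := ha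
    obtain ⟨b', rfl⟩ := ha'
    congr 1
    apply Subtype.ext
    have h1 : ((b : ℕ) * t + g b) / t = ((b' : ℕ) * t + g b') / t := haa
    rwa [hdiv, hdiv] at h1
  · intro a ha
    simp only [Finset.mem_image, Finset.mem_univ, true_and] at ha
    obtain ⟨b, rfl⟩ := ha
    exact hg2 b

def Pos (t k m : ℕ) (c : Finset (Fin (m * t)) → ℕ) (x : V) (q : ℕ) : Prop :=
  ∃ A ∈ fracMultipleVerts t k m, c A = q ∧ ∀ a ∈ A, x (a : ℕ) = 1

open Classical in
noncomputable def lam (t k m : ℕ) (c : Finset (Fin (m * t)) → ℕ) (x : V) : ℤ :=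
  if h : ∃ q, Pos t k m c x q ∨ Pos t k m c (-x) q then
    (if Pos t k m c x (Nat.find h) then ((t * (k - 1) + Nat.find h : ℕ) : ℤ)
      else -((t * (k - 1) + Nat.find h : ℕ) : ℤ))
  else (if (run x (m * t)).2 = 1 then ((run x (m * t)).1 : ℤ) else - ((run x (m * t)).1 : ℤ))

lemma lower (t k m C : ℕ) (ht : 2 ≤ t) (hk : 1 ≤ k) (c : Finset (Fin (m * t)) → ℕ)
    (hc : IsKneserColoring (m * t) 2 C (fracMultipleVerts t k m) c) :
    m * t ≤ t * (k - 1) + C := by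
  classical
  have sgn : ∀ s : SignType, -s = 1 → s = 1 → False := by decide
  -- no comparable monochromatic opposite vertices
  have opp : ∀ x y : V, le x y → ∀ q, Pos t k m c x q → Pos t k m c (-y) q → False := by
    rintro x y hxy q ⟨A, hA, hAq, hA1⟩ ⟨B, hB, hBq, hB1⟩
    have hAk : A.card = k := by
      rw [mem_verts] at hA; exact hA.1
    have hdis : Disjoint A B := by
      rw [Finset.disjoint_left]
      intro a ha hb
      have h1 := hA1 a ha
      have h2 := hB1 a hb
      have h3 := hxy a (by rw [h1]; decide)
      exact sgn (y a) h2 (h3.trans h1)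
    have hne : A ≠ B := by
      rintro rfl
      rw [disjoint_self] at hdis
      have : A = ∅ := hdis
      rw [this] at hAk
      simp at hAk
      omega
    apply hc.2 {A, B}
    · intro D hD
      simp only [Finset.mem_insert, Finset.mem_singleton] at hD
      rcases hD with rfl | rfl <;> assumption
    · exact Finset.card_pair hne
    · intro D hD E hE hDE
      simp only [Finset.coe_insert, Finset.coe_singleton, Set.mem_insert_iff,
        Set.mem_singleton_iff] at hD hE
      rcases hD with rfl | rfl <;> rcases hE with rfl | rfl
      · exact absurd rfl hDE
      · exact hdis
      · exact hdis.symm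
      · exact absurd rfl hDE
    · refine ⟨q, fun D hD => ?_⟩
      simp only [Finset.mem_insert, Finset.mem_singleton] at hD
      rcases hD with rfl | rfl <;> assumption
  have hle : ∀ x : V, le x x := fun x a _ => rfl
  have hcol : ∀ x q, Pos t k m c x q → 1 ≤ q ∧ q ≤ C := by
    rintro x q ⟨A, hA, rfl, _⟩
    simpa using hc.1 A hA
  have pos_mono : ∀ x y : V, le x y → ∀ q, Pos t k m c x q → Pos t k m c y q := by
    rintro x y hxy q ⟨A, hA, hq, h⟩
    refine ⟨A, hA, hq, fun a ha => ?_⟩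
    rw [hxy a (by rw [h a ha]; decide), h a ha]
  have le_neg : ∀ x y : V, le x y → le (-x) (-y) := by
    intro x y hxy a ha
    have : x a ≠ 0 := by intro h; apply ha; simp [h]
    simp [hxy a this]
  -- bound in the second case
  have hrun : ∀ x : V, (¬ ∃ q, Pos t k m c x q ∨ Pos t k m c (-x) q) →
      (run x (m * t)).1 ≤ t * (k - 1) := by
    intro x hx
    have h1 : (blk t x 1 m).card ≤ k - 1 := by
      by_contra h
      obtain ⟨A, hA, hA1⟩ := exists_vert t k m x 1 (by omega)
      exact hx ⟨c A, Or.inl ⟨A, hA, rfl, hA1⟩⟩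
    have h2 : (blk t x (-1) m).card ≤ k - 1 := by
      by_contra h
      obtain ⟨A, hA, hA1⟩ := exists_vert t k m x (-1) (by omega)
      exact hx ⟨c A, Or.inr ⟨A, hA, rfl, fun a ha => by simp [hA1 a ha]⟩⟩
    have h3 := run_blk t ht x m
    have h4 : t * ((blk t x 1 m).card + (blk t x (-1) m).card) ≤ t * ((k - 1) + (k - 1)) :=
      Nat.mul_le_mul_left t (by omega)
    have h5 : t * ((k - 1) + (k - 1)) = 2 * (t * (k - 1)) := by ring
    omega
  have hruns : ∀ x : V, x ≠ 0 → (∀ a, m * t ≤ a → x a = 0) →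
      (run x (m * t)).2 ≠ 0 ∧ 1 ≤ (run x (m * t)).1 := by
    intro x hx hx0
    have : (run x (m * t)).2 ≠ 0 := by
      intro h
      apply hx
      funext a
      rcases Nat.lt_or_ge a (m * t) with h' | h'
      · exact (run_pos x _ h).1 a h'
      · exact hx0 a h'
    refine ⟨this, ?_⟩
    by_contra h
    exact this (run_pos' x _ (by omega))
  -- description of lam
  have hlam : ∀ x : V,
      (∃ q, (∀ q', q' < q → ¬ (Pos t k m c x q' ∨ Pos t k m c (-x) q')) ∧
        ((Pos t k m c x q ∧ lam t k m c x = ((t * (k - 1) + q : ℕ) : ℤ)) ∨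
         (Pos t k m c (-x) q ∧ lam t k m c x = - ((t * (k - 1) + q : ℕ) : ℤ)))) ∨
      ((¬ ∃ q, Pos t k m c x q ∨ Pos t k m c (-x) q) ∧
        (((run x (m * t)).2 = 1 ∧ lam t k m c x = ((run x (m * t)).1 : ℤ)) ∨
         ((run x (m * t)).2 ≠ 1 ∧ lam t k m c x = -((run x (m * t)).1 : ℤ)))) := by
    intro x
    by_cases h : ∃ q, Pos t k m c x q ∨ Pos t k m c (-x) q
    · left
      refine ⟨Nat.find h, fun q' hq' => Nat.find_min h hq', ?_⟩
      by_cases h1 : Pos t k m c x (Nat.find h)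
      · left
        refine ⟨h1, ?_⟩
        unfold lam
        rw [dif_pos h, if_pos h1]
      · right
        refine ⟨(Nat.find_spec h).resolve_left h1, ?_⟩
        unfold lam
        rw [dif_pos h, if_neg h1]
    · right
      refine ⟨h, ?_⟩
      by_cases h1 : (run x (m * t)).2 = 1
      · left
        refine ⟨h1, ?_⟩
        unfold lam
        rw [dif_neg h, if_pos h1]
      · right
        refine ⟨h1, ?_⟩
        unfold lam
        rw [dif_neg h, if_neg h1]
  have sg2 : ∀ s : SignType, s ≠ 0 → (-s = 1 ↔ s ≠ 1) := by decide
  apply tucker (m * t) (t * (k - 1) + C) (lam t k m c)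
  · intro x hx hx0
    rcases hlam x with ⟨q, hq, h⟩ | ⟨hn, h⟩ <;> rcases hlam (-x) with ⟨q', hq', h'⟩ | ⟨hn', h'⟩
    · simp only [neg_neg] at hq' h'
      have e : q = q' := by
        rcases lt_trichotomy q q' with hlt | rfl | hlt
        · exfalso
          apply hq' q hlt
          rcases h with h | h
          · exact Or.inr h.1
          · exact Or.inl h.1
        · rfl
        · exfalso
          apply hq q' hlt
          rcases h' with h' | h'
          · exact Or.inr h'.1
          · exact Or.inl h'.1
      subst e
      rcases h with ⟨h1, h⟩ | ⟨h1, h⟩ <;> rcases h' with ⟨h2, h'⟩ | ⟨h2, h'⟩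
      · exact (opp x x (hle x) q h1 h2).elim
      · rw [h, h']
      · rw [h, h', neg_neg]
      · exact (opp x x (hle x) q h2 h1).elim
    · exfalso; apply hn'
      rw [neg_neg]
      exact ⟨q, by rcases h with h | h
                   · exact Or.inr h.1
                   · exact Or.inl h.1⟩
    · exfalso; apply hn
      rw [neg_neg] at h'
      exact ⟨q', by rcases h' with h | h
                    · exact Or.inr h.1
                    · exact Or.inl h.1⟩
    · rw [run_neg] at h'
      simp only [ne_eq] at h'
      rw [sg2 _ (hruns x hx hx0).1] at h'
      rcases h with ⟨h1, h⟩ | ⟨h1, h⟩ <;> rcases h' with ⟨h2, h'⟩ | ⟨h2, h'⟩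
      · exact absurd h1 h2
      · rw [h, h']
      · rw [h, h', neg_neg]
      · exact absurd h1 h2
  · intro x hx hx0
    have := (hruns x hx hx0).2
    rcases hlam x with ⟨q, hq, ⟨h1, h⟩ | ⟨h1, h⟩⟩ | ⟨hn, ⟨h1, h⟩ | ⟨h1, h⟩⟩
    · have := hcol _ _ h1; rw [h]; omega
    · have := hcol _ _ h1; rw [h]; omega
    · rw [h]; omega
    · rw [h]; omega
  · intro x hx hx0
    rcases hlam x with ⟨q, hq, ⟨h1, h⟩ | ⟨h1, h⟩⟩ | ⟨hn, ⟨h1, h⟩ | ⟨h1, h⟩⟩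
    · have := hcol _ _ h1; rw [h, Nat.abs_cast]; push_cast; omega
    · have := hcol _ _ h1; rw [h, abs_neg, Nat.abs_cast]; push_cast; omega
    · have := hrun x hn; rw [h, Nat.abs_cast]; omega
    · have := hrun x hn; rw [h, abs_neg, Nat.abs_cast]; omega
  · intro x y hx hx0 hy0 hxy heq
    have hrx := hruns x hx hx0
    have hmono := run_mono hxy (m * t)
    rcases hlam x with ⟨q, hq, h⟩ | ⟨hn, h⟩ <;> rcases hlam y with ⟨q', hq', h'⟩ | ⟨hn', h'⟩
    · rcases h with ⟨h1, h⟩ | ⟨h1, h⟩ <;> rcases h' with ⟨h2, h'⟩ | ⟨h2, h'⟩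
      · have := hcol _ _ h1; rw [h, h'] at heq; omega
      · have e : q = q' := by rw [h, h'] at heq; omega
        subst e
        exact opp x y hxy q h1 h2
      · have e : q = q' := by rw [h, h'] at heq; omega
        subst e
        exact opp (-x) (-y) (le_neg x y hxy) q h1 (by rwa [neg_neg])
      · have := hcol _ _ h1; rw [h, h'] at heq; omega
    · apply hn'
      rcases h with h | h
      · exact ⟨q, Or.inl (pos_mono x y hxy q h.1)⟩
      · exact ⟨q, Or.inr (pos_mono _ _ (le_neg x y hxy) q h.1)⟩
    · have hb := hrun x hn
      rcases h' with ⟨h2, h'⟩ | ⟨h2, h'⟩ <;> have := hcol _ _ h2 <;>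
        rcases h with ⟨h1, h⟩ | ⟨h1, h⟩ <;> rw [h, h'] at heq <;> omega
    · rcases h with ⟨h1, h⟩ | ⟨h1, h⟩ <;> rcases h' with ⟨h2, h'⟩ | ⟨h2, h'⟩ <;>
        rw [h, h'] at heq
      · omega
      · rcases hmono with hm | hm
        · omega
        · exact h2 (hm.2 ▸ h1)
      · rcases hmono with hm | hm
        · omega
        · exact h1 (hm.2.trans h2)
      · omega

lemma upper (t k m : ℕ) (ht : 2 ≤ t) (hk : 1 ≤ k) (hkm : k ≤ m) :
    ∃ c, IsKneserColoring (m * t) 2 (t * (m - k + 1)) (fracMultipleVerts t k m) c := by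
  classical
  refine ⟨fun A => if h : A.Nonempty then (A.min' h : ℕ) + 1 else 0, ?_, ?_⟩
  · intro A hA
    rw [mem_verts] at hA
    obtain ⟨hc, hb⟩ := hA
    have hne : A.Nonempty := by rw [← Finset.card_pos]; omega
    simp only [dif_pos hne, Finset.mem_Icc]
    refine ⟨by omega, ?_⟩
    have hmaps : ∀ a ∈ A, (a : ℕ) / t ∈ Finset.Ico ((A.min' hne : ℕ) / t) m := by
      intro a ha
      rw [Finset.mem_Ico]
      refine ⟨Nat.div_le_div_right (Finset.min'_le A a ha), ?_⟩
      rw [Nat.div_lt_iff_lt_mul (by omega)]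
      exact a.2
    have hinj : Set.InjOn (fun a : Fin (m * t) => (a : ℕ) / t) A := by
      intro a ha a' ha' haa
      exact hb a ha a' ha' haa
    have hcard := Finset.card_le_card_of_injOn _ hmaps hinj
    rw [Nat.card_Ico, hc] at hcard
    have h1 : (A.min' hne : ℕ) / t < m - k + 1 := by omega
    rw [Nat.div_lt_iff_lt_mul (by omega)] at h1
    rw [mul_comm t]; exact h1
  · rintro E hE hE2 hdis ⟨i, hi⟩
    obtain ⟨A, B, hAB, rfl⟩ := Finset.card_eq_two.1 hE2
    have hA := hE (show A ∈ ({A, B} : Finset _) by simp)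
    have hB := hE (show B ∈ ({A, B} : Finset _) by simp)
    rw [mem_verts] at hA hB
    have hneA : A.Nonempty := by rw [← Finset.card_pos]; omega
    have hneB : B.Nonempty := by rw [← Finset.card_pos]; omega
    have h1 := hi A (by simp)
    have h2 := hi B (by simp)
    simp only [dif_pos hneA] at h1
    simp only [dif_pos hneB] at h2
    have e : A.min' hneA = B.min' hneB := Fin.ext (by omega)
    have hd : Disjoint A B := hdis (by simp) (by simp) hAB
    exact Finset.disjoint_left.1 hd (Finset.min'_mem A hneA) (e ▸ Finset.min'_mem B hneB)

end Tuck

theorem stmt11 (t k m : ℕ) (ht : 2 ≤ t) (hk : 1 ≤ k) (hm : 1 ≤ m) (hkm : k ≤ m) :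
    kneserChrom (m * t) 2 (fracMultipleVerts t k m) = t * (m - k + 1) := by
  unfold kneserChrom
  apply le_antisymm
  · exact Nat.sInf_le (Tuck.upper t k m ht hk hkm)
  · obtain ⟨c, hc⟩ := Nat.sInf_mem
      (s := {C | ∃ c, IsKneserColoring (m * t) 2 C (fracMultipleVerts t k m) c})
      ⟨_, Tuck.upper t k m ht hk hkm⟩
    generalize sInf {C | ∃ c, IsKneserColoring (m * t) 2 C (fracMultipleVerts t k m) c} = C at hc ⊢
    have h := Tuck.lower t k m C ht hk c hc
    obtain ⟨d, rfl⟩ := Nat.exists_eq_add_of_le hkm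
    obtain ⟨j, rfl⟩ := Nat.exists_eq_add_of_le hk
    have e1 : 1 + j + d - (1 + j) + 1 = d + 1 := by omega
    have e2 : 1 + j - 1 = j := by omega
    rw [e1]
    rw [e2] at h
    nlinarith
end
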